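/- arXiv:2305.15110 — 5 statements merged into one kernel-verified Lean document; each statement's English description precedes it below -/
import Mathlib

section
/- Let G be a simple 3-connected graph with n vertices. If the circumference of G satisfies c(G) ≥ n - 3, then every longest cycle of G shares at least one edge with every largest bond of G. -/
open SimpleGraph

/-- An edge-cut of `G`: a set of edges of `G` whose deletion disconnects `G`. -/
def IsEdgeCut {V : Type*} (G : SimpleGraph V) (S : Set (Sym2 V)) : Prop :=
  S ⊆ G.edgeSet ∧ ¬ (G.deleteEdges S).Connected

/-- A bond: a minimal nonempty edge-cut. -/
def IsBond {V : Type*} (G : SimpleGraph V) (S : Set (Sym2 V)) : Prop :=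
  S.Nonempty ∧ IsEdgeCut G S ∧ ∀ T ⊂ S, T.Nonempty → ¬ IsEdgeCut G T

/-- A largest bond: a bond of maximum size. -/
def IsLargestBond {V : Type*} (G : SimpleGraph V) (S : Set (Sym2 V)) : Prop :=
  IsBond G S ∧ ∀ T, IsBond G T → T.ncard ≤ S.ncard

/-- The set of edges of `G` between `X` and its complement. -/
def crossEdges {V : Type*} (G : SimpleGraph V) (X : Set V) : Set (Sym2 V) :=
  {e ∈ G.edgeSet | ∃ x ∈ X, ∃ y ∈ Xᶜ, e = s(x, y)}

/-- `G` is 2-connected: at least 3 vertices and connected after deleting any ≤ 1 vertices. -/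
def TwoConnected {V : Type*} (G : SimpleGraph V) : Prop :=
  3 ≤ Nat.card V ∧ ∀ s : Set V, s.ncard ≤ 1 → (G.induce sᶜ).Connected

/-- `G` is 3-connected: at least 4 vertices and connected after deleting any ≤ 2 vertices. -/
def ThreeConnected {V : Type*} (G : SimpleGraph V) : Prop :=
  4 ≤ Nat.card V ∧ ∀ s : Set V, s.ncard ≤ 2 → (G.induce sᶜ).Connected

/-- A longest cycle of `G`. -/
def IsLongestCycle {V : Type*} (G : SimpleGraph V) {v : V} (C : G.Walk v v) : Prop :=
  C.IsCycle ∧ ∀ (u : V) (D : G.Walk u u), D.IsCycle → D.length ≤ C.length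


namespace CycleBond

variable {V : Type*}

lemma exists_cross {G : SimpleGraph V} {A X : Set V} (hA : (G.induce A).Connected) {a b : V}
    (ha : a ∈ A) (haX : a ∈ X) (hb : b ∈ A) (hbX : b ∉ X) :
    ∃ x y, x ∈ A ∧ x ∈ X ∧ y ∈ A ∧ y ∉ X ∧ G.Adj x y := by
  obtain ⟨p⟩ := hA.preconnected ⟨a, ha⟩ ⟨b, hb⟩
  obtain ⟨d, -, h1, h2⟩ := p.exists_boundary_dart {z | (z : V) ∈ X} haX hbX
  exact ⟨d.fst, d.snd, d.fst.2, h1, d.snd.2, h2, d.adj⟩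

lemma connected_of_three {G : SimpleGraph V} (h3 : ThreeConnected G) : G.Connected := by
  have h := h3.2 ∅ (by simp)
  rw [Set.compl_empty] at h
  exact (SimpleGraph.induceUnivIso G).connected_iff.1 h

/-- Cuts with two connected sides are bonds. -/
lemma isBond_crossEdges {G : SimpleGraph V} (hG : G.Connected) {X : Set V}
    (hX : (G.induce X).Connected) (hXc : (G.induce Xᶜ).Connected) :
    IsBond G (crossEdges G X) := by
  obtain ⟨a⟩ := hX.nonempty
  obtain ⟨b⟩ := hXc.nonempty
  refine ⟨?_, ⟨fun e he => he.1, ?_⟩, ?_⟩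
  · obtain ⟨p⟩ := hG.preconnected a b
    obtain ⟨d, -, h1, h2⟩ := p.exists_boundary_dart X a.2 b.2
    exact ⟨s(d.fst, d.snd), d.adj, d.fst, h1, d.snd, h2, rfl⟩
  · intro hc
    obtain ⟨p⟩ := hc.preconnected a b
    obtain ⟨d, -, h1, h2⟩ := p.exists_boundary_dart X a.2 b.2
    have := d.adj
    rw [SimpleGraph.deleteEdges_adj] at this
    exact this.2 ⟨this.1, d.fst, h1, d.snd, h2, rfl⟩
  · rintro T hT - ⟨-, hcut⟩
    apply hcut
    obtain ⟨e, ⟨he, x, hx, y, hy, rfl⟩, heT⟩ := Set.exists_of_ssubset hT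
    have key : ∀ Z : Set V, (Z = X ∨ Z = Xᶜ) → (G.induce Z).Connected → ∀ c ∈ Z, ∀ d ∈ Z,
        (G.deleteEdges T).Reachable c d := by
      intro Z hZ hconn c hc d hd
      let f : G.induce Z →g G.deleteEdges T :=
        { toFun := Subtype.val
          map_rel' := by
            rintro ⟨s, hs⟩ ⟨t, ht⟩ hst
            rw [SimpleGraph.deleteEdges_adj]
            refine ⟨hst, fun hmem => ?_⟩
            obtain ⟨-, x', hx', y', hy', heq⟩ := hT.1 hmem
            rw [Sym2.eq_iff] at heq
            rcases hZ with rfl | rfl <;> rcases heq with ⟨rfl, rfl⟩ | ⟨rfl, rfl⟩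
            exacts [hy' ht, hy' hs, hs hx', ht hx'] }
      exact (hconn.preconnected ⟨c, hc⟩ ⟨d, hd⟩).map f
    have hxy : (G.deleteEdges T).Reachable x y := by
      apply SimpleGraph.Adj.reachable
      rw [SimpleGraph.deleteEdges_adj]
      exact ⟨he, heT⟩
    rw [SimpleGraph.connected_iff_exists_forall_reachable]
    refine ⟨x, fun z => ?_⟩
    by_cases hz : z ∈ X
    · exact key X (Or.inl rfl) hX x hx z hz
    · exact hxy.trans (key Xᶜ (Or.inr rfl) hXc y hy z hz)

/-- The side of a bond that avoids a given cycle disjoint from the bond. -/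
lemma exists_side {G : SimpleGraph V} {B : Set (Sym2 V)} (hG : G.Connected) (hB : IsBond G B)
    {u : V} (C : G.Walk u u) (hC : ∀ e ∈ C.edges, e ∉ B) :
    ∃ Y : Set V, (G.induce Y).Connected ∧ (∀ z ∈ C.support, z ∉ Y) ∧ B = crossEdges G Y := by
  obtain ⟨hne, ⟨hsub, hcut⟩, hmin⟩ := hB
  obtain ⟨y, hy⟩ : ∃ y, ¬ (G.deleteEdges B).Reachable u y := by
    by_contra! h
    exact hcut ((SimpleGraph.connected_iff_exists_forall_reachable _).2 ⟨u, h⟩)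
  set K := (G.deleteEdges B).connectedComponentMk y with hK
  have hYu : u ∉ K.supp := by
    intro h
    exact hy (SimpleGraph.ConnectedComponent.exact h)
  have hyY : y ∈ K.supp := rfl
  have hcsub : crossEdges G K.supp ⊆ B := by
    rintro e ⟨he, a, ha, b, hb, rfl⟩
    by_contra hn
    apply hb
    have hab : (G.deleteEdges B).Adj a b := by
      rw [SimpleGraph.deleteEdges_adj]; exact ⟨he, hn⟩
    exact (K.mem_supp_congr_adj hab).1 ha
  refine ⟨K.supp, ?_, ?_, ?_⟩
  · have h1 : ((G.deleteEdges B).induce K.supp).Connected := K.maximal_connected_induce_supp.prop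
    exact h1.mono (fun a b hab => (SimpleGraph.deleteEdges_le B) hab)
  · intro z hz hzK
    apply hYu
    have hr : (G.deleteEdges B).Reachable u z := by
      let C' := C.toDeleteEdges B hC
      have : z ∈ C'.support := by simpa [C'] using hz
      classical
      exact ⟨C'.takeUntil z this⟩
    have : (G.deleteEdges B).connectedComponentMk z = K := hzK
    rw [SimpleGraph.ConnectedComponent.mem_supp_iff, ← this]
    exact SimpleGraph.ConnectedComponent.sound hr
  · by_contra hneq
    refine hmin _ (hcsub.ssubset_of_ne (Ne.symm hneq)) ?_ ⟨fun e he => he.1, ?_⟩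
    · obtain ⟨p⟩ := hG.preconnected y u
      obtain ⟨d, -, h1, h2⟩ := p.exists_boundary_dart K.supp hyY hYu
      exact ⟨s(d.fst, d.snd), d.adj, d.fst, h1, d.snd, h2, rfl⟩
    · intro hc
      obtain ⟨p⟩ := hc.preconnected y u
      obtain ⟨d, -, h1, h2⟩ := p.exists_boundary_dart K.supp hyY hYu
      have := d.adj
      rw [SimpleGraph.deleteEdges_adj] at this
      exact this.2 ⟨this.1, d.fst, h1, d.snd, h2, rfl⟩

lemma three_le_degree [Finite V] {G : SimpleGraph V} (h3 : ThreeConnected G) (v : V) :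
    3 ≤ (G.neighborSet v).ncard := by
  by_contra! hlt
  have hc := h3.2 (G.neighborSet v) (by omega)
  have hv : v ∈ (G.neighborSet v)ᶜ := by simp
  have : ∃ b, b ∉ insert v (G.neighborSet v) := by
    by_contra! h
    have h1 : insert v (G.neighborSet v) = Set.univ := Set.eq_univ_of_forall h
    have h2 := Set.ncard_insert_le v (G.neighborSet v)
    rw [h1, Set.ncard_univ] at h2
    have := h3.1
    omega
  obtain ⟨b, hb⟩ := this
  rw [Set.mem_insert_iff, not_or] at hb
  obtain ⟨x, y, -, hx, hy, -, hxy⟩ := exists_cross (X := {v}) hc hv rfl hb.2 hb.1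
  rw [Set.mem_singleton_iff.1 hx] at hxy
  exact hy hxy

lemma cut_insert [Finite V] {G : SimpleGraph V} {Z : Set V} {v : V} (hv : v ∉ Z) :
    (crossEdges G (insert v Z)).ncard + (G.neighborSet v ∩ Z).ncard
      = (crossEdges G Z).ncard + (G.neighborSet v \ Z).ncard := by
  have hinj : Function.Injective (fun z : V => s(v, z)) := by
    intro a b hab
    rw [Sym2.eq_iff] at hab
    grind
  rw [← Set.ncard_image_of_injective (G.neighborSet v ∩ Z) hinj,
    ← Set.ncard_image_of_injective (G.neighborSet v \ Z) hinj,
    ← Set.ncard_union_eq _ (Set.toFinite _) (Set.toFinite _),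
    ← Set.ncard_union_eq _ (Set.toFinite _) (Set.toFinite _)]
  · congr 1
    ext e
    induction e using Sym2.ind with
    | _ a b =>
    simp only [crossEdges, Set.mem_union, Set.mem_ofPred_eq, Set.mem_image, Set.mem_inter_iff,
      Set.mem_sdiff, SimpleGraph.mem_neighborSet, SimpleGraph.mem_edgeSet, Set.mem_compl_iff,
      Set.mem_insert_iff, Sym2.eq_iff]
    constructor
    · rintro (⟨h, x, hx, y, hy, hxy⟩ | ⟨x, hx, hxy⟩)
      · have := h.symm
        grind
      · have := hx.1.symm
        grind
    · rintro (⟨h, x, hx, y, hy, hxy⟩ | ⟨x, hx, hxy⟩)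
      · have := h.symm
        grind
      · have := hx.1.symm
        have := hx.1.ne
        grind
  · rw [Set.disjoint_left]
    rintro e ⟨h, x, hx, y, hy, rfl⟩ ⟨z, hz, hze⟩
    simp only [Sym2.eq_iff] at hze
    grind
  · rw [Set.disjoint_left]
    rintro e ⟨h, x, hx, y, hy, rfl⟩ ⟨z, hz, hze⟩
    simp only [Sym2.eq_iff] at hze
    grind

lemma degree_split [Finite V] (G : SimpleGraph V) (Z : Set V) (v : V) :
    (G.neighborSet v ∩ Z).ncard + (G.neighborSet v \ Z).ncard = (G.neighborSet v).ncard :=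
  Set.ncard_inter_add_ncard_sdiff_eq_ncard _ _ (Set.toFinite _)

/-- Closing up a path through an outside path. -/
lemma ext_cycle {G : SimpleGraph V} {v w y y' : V} (p : G.Walk w v) (hp : p.IsPath)
    (hne : v ≠ w) (q : G.Walk y y') (hq : q.IsPath) (hd : ∀ z ∈ q.support, z ∉ p.support)
    (h1 : G.Adj v y) (h2 : G.Adj y' w) :
    ∃ D : G.Walk v v, D.IsCycle ∧ D.length = p.length + q.length + 2 := by
  refine ⟨SimpleGraph.Walk.cons h1 (q.append (SimpleGraph.Walk.cons h2 p)), ?_, ?_⟩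
  · rw [SimpleGraph.Walk.cons_isCycle_iff]
    constructor
    · rw [SimpleGraph.Walk.isPath_def, SimpleGraph.Walk.support_append,
        SimpleGraph.Walk.support_cons, List.tail_cons, List.nodup_append]
      refine ⟨hq.support_nodup, hp.support_nodup, ?_⟩
      rintro a ha b hb rfl
      exact hd a ha hb
    · rw [SimpleGraph.Walk.edges_append, SimpleGraph.Walk.edges_cons, List.mem_append,
        List.mem_cons]
      have hy : y ∉ p.support := hd _ q.start_mem_support
      have hv : v ∉ q.support := fun h => hd _ h p.end_mem_support
      rintro (h | h | h)
      · exact hv (q.fst_mem_support_of_mem_edges h)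
      · rw [Sym2.eq_iff] at h
        rcases h with ⟨h, -⟩ | ⟨h, -⟩
        · exact hv (h ▸ q.end_mem_support)
        · exact hne h
      · exact hy (p.snd_mem_support_of_mem_edges h)
  · simp only [SimpleGraph.Walk.length_cons, SimpleGraph.Walk.length_append]
    omega

lemma exists_path_in {G : SimpleGraph V} {D : Set V} (hD : (G.induce D).Connected) {y y' : V}
    (hy : y ∈ D) (hy' : y' ∈ D) :
    ∃ q : G.Walk y y', q.IsPath ∧ ∀ z ∈ q.support, z ∈ D := by
  classical
  obtain ⟨p⟩ := hD.preconnected ⟨y, hy⟩ ⟨y', hy'⟩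
  let q : G.Walk y y' := p.map (SimpleGraph.Embedding.induce (G := G) D).toHom
  refine ⟨q.bypass, q.bypass_isPath, fun z hz => ?_⟩
  have hz' := q.support_bypass_subset_support hz
  have hz' : z ∈ p.support.map (SimpleGraph.Embedding.induce (G := G) D).toHom := by
    rw [← SimpleGraph.Walk.support_map]; exact hz'
  rw [List.mem_map] at hz'
  obtain ⟨a, -, rfl⟩ := hz'
  exact a.2

/-- Decomposition of a cycle at a vertex. -/
lemma decomp {G : SimpleGraph V} {u v : V} (C : G.Walk u u) (hC : C.IsCycle)
    (hv : v ∈ C.support) :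
    ∃ (w x t : V) (p : G.Walk x t), p.IsPath ∧ v ∉ p.support ∧ w ∉ p.support ∧ G.Adj v w ∧
      G.Adj w x ∧ G.Adj t v ∧ p.length + 3 = C.length ∧
      ∀ z, z ∈ C.support ↔ z = v ∨ z = w ∨ z ∈ p.support := by
  classical
  have hlen := C.length_rotate v hv
  have hsup := fun z => C.mem_support_rotate_iff v hv (w := z)
  have hcyc : (C.rotate v hv).IsCycle := hC.rotate hv
  generalize C.rotate v hv = C' at *
  have h3 := hcyc.three_le_length
  cases C' with
  | nil => simp at h3
  | @cons _ w _ h1 p1 =>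
    rw [SimpleGraph.Walk.cons_isCycle_iff] at hcyc
    obtain ⟨hp1, -⟩ := hcyc
    cases p1 with
    | nil => simp at h3
    | @cons _ x _ h2 p2 =>
      rw [SimpleGraph.Walk.cons_isPath_iff] at hp1
      obtain ⟨hp2, hw⟩ := hp1
      obtain ⟨p3, hp3⟩ : ∃ p3 : G.Walk v x, p3 = p2.reverse := ⟨_, rfl⟩
      have hp2' : p2 = p3.reverse := by rw [hp3, SimpleGraph.Walk.reverse_reverse]
      subst hp2'
      cases p3 with
      | nil => simp at h3
      | @cons _ t _ h3' p4 =>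
        simp only [SimpleGraph.Walk.isPath_reverse_iff, SimpleGraph.Walk.cons_isPath_iff] at hp2
        refine ⟨w, x, t, p4.reverse, ?_, ?_, ?_, h1, h2, h3'.symm, ?_, ?_⟩
        · simpa using hp2.1
        · simpa using hp2.2
        · rw [SimpleGraph.Walk.support_reverse, List.mem_reverse] at hw ⊢
          rw [SimpleGraph.Walk.support_cons, List.mem_cons, not_or] at hw
          exact hw.2
        · simp only [SimpleGraph.Walk.length_cons, SimpleGraph.Walk.length_reverse] at hlen ⊢
          omega
        · intro z
          rw [← hsup z]
          simp only [SimpleGraph.Walk.support_cons, SimpleGraph.Walk.support_reverse,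
            List.mem_cons, List.mem_reverse]
          tauto

lemma connected_insert {G : SimpleGraph V} {Z : Set V} (hZ : (G.induce Z).Connected) {v z : V}
    (hz : z ∈ Z) (h : G.Adj v z) : (G.induce (insert v Z)).Connected := by
  rw [Set.insert_eq]
  refine SimpleGraph.connected_induce_union ?_ hZ.preconnected (Set.mem_singleton v) hz h
  rintro ⟨a, rfl⟩ ⟨b, rfl⟩
  exact SimpleGraph.Reachable.refl _

lemma connected_dominated {G : SimpleGraph V} {A Z : Set V} (hA : (G.induce A).Connected)
    (hAZ : A ⊆ Z) (h : ∀ r ∈ Z, r ∉ A → ∃ a ∈ A, G.Adj r a) : (G.induce Z).Connected := by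
  obtain ⟨a⟩ := hA.nonempty
  refine SimpleGraph.induce_connected_of_patches a.1 (hAZ a.2) ?_
  intro r hr
  by_cases hrA : r ∈ A
  · exact ⟨A, hAZ, a.2, hrA, hA.preconnected _ _⟩
  · obtain ⟨b, hb, hrb⟩ := h r hr hrA
    refine ⟨insert r A, Set.insert_subset hr hAZ, Set.mem_insert_of_mem _ a.2,
      Set.mem_insert _ _, (connected_insert hA hb hrb).preconnected _ _⟩

lemma no_ext_one {G : SimpleGraph V} {u v w x t : V} {C : G.Walk u u} (hC : IsLongestCycle G C)
    {p : G.Walk x t} (hp : p.IsPath) (hv : v ∉ p.support) (hw : w ∉ p.support)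
    (hvw : G.Adj v w) (hwx : G.Adj w x) (htv : G.Adj t v) (hlen : p.length + 3 = C.length)
    (hS : ∀ z, z ∈ C.support ↔ z = v ∨ z = w ∨ z ∈ p.support)
    {D : Set V} (hD : (G.induce D).Connected) (hDC : ∀ z ∈ C.support, z ∉ D)
    {a b : V} (ha : a ∈ D) (hb : b ∈ D) (hva : G.Adj v a) (hwb : G.Adj w b) : False := by
  obtain ⟨q, hq, hqD⟩ := exists_path_in hD ha hb
  obtain ⟨E, hE, hEl⟩ := ext_cycle (SimpleGraph.Walk.cons hwx (p.concat htv))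
    (by
      rw [SimpleGraph.Walk.cons_isPath_iff]
      refine ⟨hp.concat hv htv, ?_⟩
      rw [SimpleGraph.Walk.support_concat]
      simp [hw, hvw.ne'])
    hvw.ne q hq
    (by
      intro z hz hz2
      refine hDC z ?_ (hqD z hz)
      rw [hS]
      rw [SimpleGraph.Walk.support_cons, SimpleGraph.Walk.support_concat] at hz2
      simp at hz2
      tauto) hva hwb.symm
  have := hC.2 v E hE
  simp only [SimpleGraph.Walk.length_cons, SimpleGraph.Walk.length_concat] at hEl
  omega

lemma no_ext_two {G : SimpleGraph V} {u v w x t : V} {C : G.Walk u u} (hC : IsLongestCycle G C)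
    {p : G.Walk x t} (hp : p.IsPath) (hv : v ∉ p.support)
    (htv : G.Adj t v) (hlen : p.length + 3 = C.length)
    (hS : ∀ z, z ∈ C.support ↔ z = v ∨ z = w ∨ z ∈ p.support)
    {D : Set V} (hD : (G.induce D).Connected) (hDC : ∀ z ∈ C.support, z ∉ D)
    {a b : V} (ha : a ∈ D) (hb : b ∈ D) (hab : a ≠ b) (hva : G.Adj v a) (hxb : G.Adj x b) :
    False := by
  obtain ⟨q, hq, hqD⟩ := exists_path_in hD ha hb
  obtain ⟨E, hE, hEl⟩ := ext_cycle (p.concat htv) (hp.concat hv htv)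
    (by rintro rfl; exact hv p.start_mem_support) q hq
    (by
      intro z hz hz2
      refine hDC z ?_ (hqD z hz)
      rw [hS]
      rw [SimpleGraph.Walk.support_concat] at hz2
      simp at hz2
      tauto) hva hxb.symm
  have hq1 : q.length ≠ 0 := fun h => hab (SimpleGraph.Walk.eq_of_length_eq_zero h)
  have := hC.2 v E hE
  simp only [SimpleGraph.Walk.length_concat] at hEl
  omega

set_option maxHeartbeats 1000000 in
lemma core [Finite V] {G : SimpleGraph V} (h3 : ThreeConnected G) {u v w x t : V}
    {C : G.Walk u u} (hC : IsLongestCycle G C) {Y : Set V} (hY : (G.induce Y).Connected)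
    (hYC : ∀ z ∈ C.support, z ∉ Y) (hY3 : Y.ncard ≤ 3)
    (hmax : ∀ Z : Set V, (G.induce Z).Connected → (G.induce Zᶜ).Connected →
      (crossEdges G Z).ncard ≤ (crossEdges G Y).ncard)
    {p : G.Walk x t} (hp : p.IsPath) (hv : v ∉ p.support) (hw : w ∉ p.support)
    (hvw : G.Adj v w) (hwx : G.Adj w x) (htv : G.Adj t v) (hlen : p.length + 3 = C.length)
    (hS : ∀ z, z ∈ C.support ↔ z = v ∨ z = w ∨ z ∈ p.support)
    {y : V} (hy : y ∈ Y) (hvy : G.Adj v y)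
    (hR : ∀ r, r ∉ Y → r ∉ C.support → ∃ a ∈ p.support, G.Adj r a)
    (hfull : Y.ncard = 3 → ∀ r, r ∉ Y → r ∈ C.support) : False := by
  have hvS : v ∈ C.support := by rw [hS]; tauto
  have hwS : w ∈ C.support := by rw [hS]; tauto
  have hpS : ∀ z ∈ p.support, z ∈ C.support := fun z hz => by rw [hS]; tauto
  have hvY := hYC v hvS
  have hwY := hYC w hwS
  have hwN : ∀ b ∈ Y, ¬ G.Adj w b := fun b hb hwb =>
    no_ext_one hC hp hv hw hvw hwx htv hlen hS hY hYC hy hb hvy hwb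
  have hwt : w ≠ t := by rintro rfl; exact hw p.end_mem_support
  have c1 := connected_insert hY hy hvy
  have c2 := connected_insert c1 (Set.mem_insert v Y) hvw.symm
  have hwZ : w ∉ insert v Y := by
    rw [Set.mem_insert_iff, not_or]; exact ⟨hvw.ne', hwY⟩
  have hc2 : (G.induce (insert w (insert v Y))ᶜ).Connected := by
    refine connected_dominated p.connected_induce_support ?_ ?_
    · intro z hz
      have hz : z ∈ p.support := hz
      have := hYC z (hpS z hz)
      simp only [Set.mem_compl_iff, Set.mem_insert_iff]
      grind
    · intro r hr hrp
      have hrp : r ∉ p.support := hrp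
      simp only [Set.mem_compl_iff, Set.mem_insert_iff, not_or] at hr
      refine hR r hr.2.2 ?_
      rw [hS]
      tauto
  have m2 := hmax _ c2 hc2
  have g1 := cut_insert (G := G) hvY
  have g2 := cut_insert (G := G) hwZ
  have dv := degree_split G Y v
  have dw := degree_split G (insert v Y) w
  have d3v := three_le_degree h3 v
  have d3w := three_le_degree h3 w
  have ew : (G.neighborSet w ∩ insert v Y).ncard ≤ 1 := by
    have : G.neighborSet w ∩ insert v Y ⊆ {v} := by
      rintro z ⟨hz1, hz2⟩
      rcases hz2 with rfl | hz2
      · rfl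
      · exact (hwN z hz2 hz1).elim
    exact (Set.ncard_le_ncard this).trans (by simp)
  have hsub2 : ({w, t} : Set V) ⊆ G.neighborSet v \ Y := by
    rintro z (rfl | rfl)
    · exact ⟨hvw, hwY⟩
    · exact ⟨htv.symm, hYC _ (hpS _ p.end_mem_support)⟩
  have dv2 : 2 ≤ (G.neighborSet v \ Y).ncard := by
    rw [← Set.ncard_pair hwt]
    exact Set.ncard_le_ncard hsub2
  have hle : (G.neighborSet v ∩ Y).ncard ≤ Y.ncard := Set.ncard_le_ncard Set.inter_subset_right
  have he3 : (G.neighborSet v ∩ Y).ncard = 3 := by omega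
  have hYall : G.neighborSet v ∩ Y = Y :=
    Set.eq_of_subset_of_ncard_le Set.inter_subset_right (by omega)
  have hYv : ∀ z ∈ Y, G.Adj v z := fun z hz => by
    rw [← hYall] at hz; exact hz.1
  have hN2 : (G.neighborSet v \ Y).ncard = 2 := by omega
  have hNeq : ({w, t} : Set V) = G.neighborSet v \ Y :=
    Set.eq_of_subset_of_ncard_le hsub2 (by rw [Set.ncard_pair hwt, hN2])
  have hfull' := hfull (by omega)
  cases p with
  | nil =>
    have : G.neighborSet w ⊆ {v, x} := by
      intro z hz
      have hz : G.Adj w z := hz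
      have hzY : z ∉ Y := fun h => hwN z h hz
      have := hfull' z hzY
      rw [hS] at this
      simp only [SimpleGraph.Walk.support_nil, List.mem_singleton] at this
      rcases this with h | rfl | h
      · exact Or.inl h
      · exact (G.irrefl hz).elim
      · exact Or.inr h
    have h1 := Set.ncard_le_ncard this
    have h2 := Set.ncard_insert_le v {x}
    rw [Set.ncard_singleton] at h2
    omega
  | @cons _ x' _ hxx p' =>
    have hp0 := hp
    rw [SimpleGraph.Walk.cons_isPath_iff] at hp
    obtain ⟨hp', hx⟩ := hp
    have hxt : x ≠ t := by rintro rfl; exact hx p'.end_mem_support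
    have hxS : x ∈ C.support := hpS x (SimpleGraph.Walk.start_mem_support _)
    have hxY := hYC x hxS
    have hxw : x ≠ w := hwx.ne'
    have hxv : x ≠ v := by rintro rfl; exact hv (SimpleGraph.Walk.start_mem_support _)
    have hvx : ¬ G.Adj v x := by
      intro h
      have : x ∈ ({w, t} : Set V) := by rw [hNeq]; exact ⟨h, hxY⟩
      rcases this with h | h
      · exact hxw h
      · exact hxt h
    have hxN : ∀ b ∈ Y, ¬ G.Adj x b := by
      intro b hb hxb
      obtain ⟨a, ha, hab⟩ := Set.exists_ne_of_one_lt_ncard (s := Y) (by omega) b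
      exact no_ext_two hC hp0 hv htv hlen hS hY hYC ha hb hab (hYv a ha) hxb
    have hxZ : x ∉ insert w (insert v Y) := by
      simp only [Set.mem_insert_iff, not_or]; exact ⟨hxw, hxv, hxY⟩
    have c3 := connected_insert c2 (Set.mem_insert w _) hwx.symm
    have hc3 : (G.induce (insert x (insert w (insert v Y)))ᶜ).Connected := by
      have : (insert x (insert w (insert v Y)))ᶜ = {z | z ∈ p'.support} := by
        ext z
        have h1 := hfull' z
        have h2 := hYC z
        rw [hS] at h1 h2
        simp only [SimpleGraph.Walk.support_cons, List.mem_cons, not_or] at h1 h2 hv hw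
        show z ∉ _ ↔ z ∈ p'.support
        simp only [Set.mem_insert_iff, not_or]
        constructor
        · rintro ⟨e1, e2, e3, e4⟩
          have := h1 e4
          tauto
        · intro hz
          refine ⟨?_, ?_, ?_, h2 (by tauto)⟩
          · rintro rfl; exact hx hz
          · rintro rfl; exact hw.2 hz
          · rintro rfl; exact hv.2 hz
      rw [this]
      exact p'.connected_induce_support
    have m3 := hmax _ c3 hc3
    have g3 := cut_insert (G := G) hxZ
    have dx := degree_split G (insert w (insert v Y)) x
    have d3x := three_le_degree h3 x
    have ex : (G.neighborSet x ∩ insert w (insert v Y)).ncard ≤ 1 := by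
      have : G.neighborSet x ∩ insert w (insert v Y) ⊆ {w} := by
        rintro z ⟨hz1, hz2⟩
        have hz1 : G.Adj x z := hz1
        rcases hz2 with rfl | rfl | hz2
        · rfl
        · exact (hvx hz1.symm).elim
        · exact (hxN z hz2 hz1).elim
      exact (Set.ncard_le_ncard this).trans (by simp)
    omega

lemma main [Finite V] {G : SimpleGraph V} (h3 : ThreeConnected G) {u : V}
    {C : G.Walk u u} (hC : IsLongestCycle G C) (hn : Nat.card V ≤ C.length + 3)
    {Y : Set V} (hY : (G.induce Y).Connected)
    (hYC : ∀ z ∈ C.support, z ∉ Y)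
    (hmax : ∀ Z : Set V, (G.induce Z).Connected → (G.induce Zᶜ).Connected →
      (crossEdges G Z).ncard ≤ (crossEdges G Y).ncard) : False := by
  have hG := connected_of_three h3
  set R : Set V := {z | z ∉ C.support ∧ z ∉ Y} with hRdef
  set S : Set V := {z | z ∈ C.support} with hSdef
  have hScard : S.ncard = C.length := by
    obtain ⟨w, x, t, p, hp, hv, hw, hvw, -, -, hlen, hS⟩ := decomp C hC.1 C.start_mem_support
    classical
    have h1 : S = ((insert u (insert w p.support.toFinset) : Finset V) : Set V) := by
      ext z
      show z ∈ C.support ↔ _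
      rw [hS]
      simp
    rw [h1, Set.ncard_coe_finset, Finset.card_insert_of_notMem, Finset.card_insert_of_notMem,
      List.toFinset_card_of_nodup hp.support_nodup, SimpleGraph.Walk.length_support]
    · omega
    · simpa using hw
    · simp only [Finset.mem_insert, List.mem_toFinset, not_or]
      exact ⟨hvw.ne, hv⟩
  have hcount : S.ncard + Y.ncard + R.ncard = Nat.card V := by
    rw [← Set.ncard_union_eq, ← Set.ncard_union_eq, ← Set.ncard_univ]
    · congr 1
      ext z
      show (z ∈ C.support ∨ z ∈ Y) ∨ (z ∉ C.support ∧ z ∉ Y) ↔ True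
      tauto
    · rw [Set.disjoint_left]
      rintro z (hz | hz) hz2
      · exact hz2.1 hz
      · exact hz2.2 hz
    · exact Set.disjoint_left.2 hYC
  have hYR : Y.ncard + R.ncard ≤ 3 := by omega
  have hC3 := hC.1.three_le_length
  obtain ⟨⟨y0, hy0⟩⟩ := hY.nonempty
  have huY := hYC u C.start_mem_support
  have hYpos : 1 ≤ Y.ncard := (Set.ncard_pos (Set.toFinite _)).2 ⟨y0, hy0⟩
  -- the singleton case
  by_cases hY1 : Y.ncard = 1
  · obtain ⟨y, rfl⟩ := Set.ncard_eq_one.1 hY1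
    have hdeg := three_le_degree h3 y
    obtain ⟨v, hv⟩ : (G.neighborSet y).Nonempty := (Set.ncard_pos (Set.toFinite _)).1 (by omega)
    have hv : G.Adj y v := hv
    have c1 := connected_insert hY rfl hv.symm
    have c2 := h3.2 (insert v {y}) ((Set.ncard_insert_le _ _).trans (by simp))
    have m := hmax _ c1 c2
    have g := cut_insert (G := G) (Z := {y}) (v := v) (by simpa using hv.ne')
    have d := degree_split G {y} v
    have d3 := three_le_degree h3 v
    have e : (G.neighborSet v ∩ {y}).ncard ≤ 1 :=
      (Set.ncard_le_ncard Set.inter_subset_right).trans (by simp)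
    omega
  by_cases hRe : R = ∅
  · have hfull : ∀ r, r ∉ Y → r ∈ C.support := by
      intro r hr
      by_contra h
      have : r ∈ R := ⟨h, hr⟩
      rw [hRe] at this
      exact this
    obtain ⟨y, v, -, hy, -, hv, hyv⟩ := exists_cross (h3.2 ∅ (by simp)) (a := y0) (b := u)
      (by simp) hy0 (by simp) huY
    obtain ⟨w, x, t, p, hp, hvp, hw, hvw, hwx, htv, hlen, hS⟩ := decomp C hC.1 (hfull v hv)
    exact core h3 hC hY hYC (by omega) hmax hp hvp hw hvw hwx htv hlen hS hy hyv.symm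
      (fun r h1 h2 => (h2 (hfull r h1)).elim) (fun _ => hfull)
  have hRpos : 1 ≤ R.ncard := (Set.ncard_pos (Set.toFinite _)).2 (Set.nonempty_iff_ne_empty.2 hRe)
  have hY2 : Y.ncard = 2 := by omega
  obtain ⟨r, hr⟩ := Set.ncard_eq_one.1 (show R.ncard = 1 by omega)
  have hrR : r ∈ R := by rw [hr]; rfl
  have hrS : r ∉ C.support := hrR.1
  have hrY : r ∉ Y := hrR.2
  have honly : ∀ z, z ∉ Y → z ∉ C.support → z = r := by
    intro z h1 h2
    have : z ∈ R := ⟨h2, h1⟩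
    rw [hr] at this
    exact this
  have hdr := three_le_degree h3 r
  by_cases hradj : ∃ b ∈ Y, G.Adj r b
  · obtain ⟨b, hb, hrb⟩ := hradj
    have hYr := connected_insert hY hb hrb
    obtain ⟨x0, hx0S, hx0⟩ : ∃ x0 ∈ C.support, G.Adj r x0 := by
      by_contra! h
      have : G.neighborSet r ⊆ Y := by
        intro z hz
        have hz : G.Adj r z := hz
        by_contra hzY
        by_cases hzS : z ∈ C.support
        · exact h z hzS hz
        · exact hz.ne (honly z hzY hzS).symm
      have := Set.ncard_le_ncard this
      omega
    obtain ⟨b0, hb0S, hb0⟩ := Set.exists_ne_of_one_lt_ncard (s := S) (by omega) x0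
    have hb0S : b0 ∈ C.support := hb0S
    have hne : ∀ z ∈ Y, z ∈ ({r, x0} : Set V)ᶜ := by
      rintro z hz (rfl | rfl)
      · exact hrY hz
      · exact hYC _ hx0S hz
    obtain ⟨y, v, -, hy, hv1, hv, hyv⟩ := exists_cross (X := Y)
      (h3.2 {r, x0} ((Set.ncard_insert_le _ _).trans (by simp))) (a := y0) (b := b0)
      (hne _ hy0) hy0
      (by
        rintro (rfl | rfl)
        · exact hrS hb0S
        · exact hb0 rfl) (hYC _ hb0S)
    simp only [Set.mem_compl_iff, Set.mem_insert_iff, Set.mem_singleton_iff, not_or] at hv1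
    have hvS : v ∈ C.support := by
      by_contra h
      exact hv1.1 (honly v hv h)
    obtain ⟨w, x, t, p, hp, hvp, hw, hvw, hwx, htv, hlen, hS⟩ := decomp C hC.1 hvS
    have hDC : ∀ z ∈ C.support, z ∉ insert r Y := by
      rintro z hz (rfl | h)
      · exact hrS hz
      · exact hYC z hz h
    have hx0p : x0 ∈ p.support := by
      rcases (hS x0).1 hx0S with h | rfl | h
      · exact (hv1.2 h.symm).elim
      · exact (no_ext_one hC hp hvp hw hvw hwx htv hlen hS hYr hDC
          (Set.mem_insert_of_mem _ hy) (Set.mem_insert _ _) hyv.symm hx0.symm).elim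
      · exact h
    refine core h3 hC hY hYC (by omega) hmax hp hvp hw hvw hwx htv hlen hS hy hyv.symm
      (fun z h1 h2 => ⟨x0, hx0p, ?_⟩) (fun h => by omega)
    rw [honly z h1 h2]
    exact hx0
  · push Not at hradj
    obtain ⟨y, v, -, hy, -, hv, hyv⟩ := exists_cross (h3.2 ∅ (by simp)) (a := y0) (b := u)
      (by simp) hy0 (by simp) huY
    have hvS : v ∈ C.support := by
      by_contra h
      rw [honly v hv h] at hyv
      exact hradj y hy hyv.symm
    obtain ⟨w, x, t, p, hp, hvp, hw, hvw, hwx, htv, hlen, hS⟩ := decomp C hC.1 hvS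
    obtain ⟨a, ha, hra⟩ : ∃ a ∈ p.support, G.Adj r a := by
      by_contra! h
      have : G.neighborSet r ⊆ {v, w} := by
        intro z hz
        have hz : G.Adj r z := hz
        have hzY : z ∉ Y := fun h => hradj z h hz
        have hzS : z ∈ C.support := by
          by_contra hzS
          exact hz.ne (honly z hzY hzS).symm
        rcases (hS z).1 hzS with h1 | h1 | h1
        · exact Or.inl h1
        · exact Or.inr h1
        · exact (h z h1 hz).elim
      have h1 := Set.ncard_le_ncard this
      have h2 := Set.ncard_insert_le v {w}
      rw [Set.ncard_singleton] at h2
      omega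
    refine core h3 hC hY hYC (by omega) hmax hp hvp hw hvw hwx htv hlen hS hy hyv.symm
      (fun z h1 h2 => ⟨a, ha, ?_⟩) (fun h => by omega)
    rw [honly z h1 h2]
    exact hra

end CycleBond

/-- if a simple 3-connected graph on `n` vertices has circumference at least
`n - 3`, then every longest cycle meets every largest bond. -/
theorem longest_cycle_meets_largest_bond_of_circ {V : Type*} [Fintype V] (G : SimpleGraph V)
    (h3 : ThreeConnected G)
    (hcirc : ∃ (v : V) (C₀ : G.Walk v v), C₀.IsCycle ∧ Nat.card V ≤ C₀.length + 3)
    (u : V) (C : G.Walk u u) (hC : IsLongestCycle G C)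
    (B : Set (Sym2 V)) (hB : IsLargestBond G B) :
    ∃ e ∈ C.edges, e ∈ B := by
  by_contra! hcon
  have hG := CycleBond.connected_of_three h3
  obtain ⟨Y, hY, hYC, rfl⟩ := CycleBond.exists_side hG hB.1 C hcon
  obtain ⟨v, C₀, hC₀, hn⟩ := hcirc
  have hle := hC.2 v C₀ hC₀
  exact CycleBond.main h3 hC (by omega) hY hYC
    (fun Z h1 h2 => hB.2 _ (CycleBond.isBond_crossEdges hG h1 h2))
end

section
/- Let G be a simple 3-connected graph with n vertices and m edges. If the size of a largest bond satisfies c*(G) ≥ m - n - 1, then every longest cycle of G shares at least one edge with every largest bond of G. -/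
open SimpleGraph

/-- A list of vertices that is cyclically a chain for adjacency. -/
def CycList {V : Type*} (G : SimpleGraph V) (l : List V) : Prop :=
  l.Nodup ∧ 3 ≤ l.length ∧ List.IsChain G.Adj (l ++ l)

theorem CycList.toCycle {V : Type*} {G : SimpleGraph V} {l : List V} (h : CycList G l) :
    ∃ (v : V) (D : G.Walk v v), D.IsCycle ∧ D.length = l.length := by
  obtain ⟨hn, h3, hc⟩ := h
  have hne : l ≠ [] := by rintro rfl; simp at h3
  have hc' := List.isChain_append.1 hc
  have hadj : G.Adj (l.getLast hne) (l.head hne) :=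
    hc'.2.2 _ (List.getLast_mem_getLast? hne) _ (List.head_mem_head? hne)
  have hP : (Walk.ofSupport l hne hc'.1).IsPath := by
    apply Walk.IsPath.mk'
    rw [Walk.support_ofSupport]; exact hn
  refine ⟨_, Walk.cons hadj (Walk.ofSupport l hne hc'.1), ?_, ?_⟩
  · rw [Walk.cons_isCycle_iff]
    refine ⟨hP, fun he => ?_⟩
    have : (Walk.ofSupport l hne hc'.1).length = 1 := by
      rw [Sym2.eq_swap] at he
      exact Walk.IsPath.length_eq_one_of_mem_edges hP he
    rw [Walk.length_ofSupport] at this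
    omega
  · rw [Walk.length_cons, Walk.length_ofSupport]; omega

theorem CycList.rot {V : Type*} {G : SimpleGraph V} {l l' : List V} (h : CycList G l)
    (hr : l ~r l') : CycList G l' := by
  obtain ⟨n, rfl⟩ := hr
  induction n with
  | zero => simpa using h
  | succ n ih =>
    rw [← List.rotate_rotate]
    generalize l.rotate n = m at ih
    obtain ⟨hn, h3, hc⟩ := ih
    refine ⟨by simpa using hn, by simpa using h3, ?_⟩
    cases m with
    | nil => simpa using hc
    | cons a t =>
      simp only [List.rotate_cons_succ, List.rotate_zero]
      have h1 : List.IsChain G.Adj (t ++ a :: t) := by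
        simpa using hc.tail
      simp [List.isChain_append, List.isChain_cons] at h1 hc ⊢
      grind

theorem cyc_split {V : Type*} [DecidableEq V] {l : List V} (hn : l.Nodup) {p q : V}
    (hp : p ∈ l) (hq : q ∈ l) (hpq : p ≠ q) :
    ∃ l1 l2 : List V, l ~r l1 ++ l2 ∧ l1.head? = some (l.formPerm p) ∧ l1.getLast? = some q ∧
      l2.head? = some (l.formPerm q) ∧ l2.getLast? = some p := by
  obtain ⟨s, t, rfl⟩ := List.append_of_mem hp
  have hr : (s ++ p :: t) ~r (p :: t ++ s) := List.isRotated_append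
  have hq' : q ∈ t ++ s := by
    have := hr.mem_iff.1 hq
    simp at this
    simp
    tauto
  obtain ⟨m1, m2, hm⟩ := List.append_of_mem hq'
  have hr1 : (s ++ p :: t) ~r ((m1 ++ [q]) ++ (m2 ++ [p])) := by
    refine hr.trans ?_
    have : p :: t ++ s = [p] ++ (m1 ++ q :: m2) := by simp [← hm]
    rw [this]
    refine List.isRotated_append.trans ?_
    simp only [List.append_assoc, List.cons_append, List.nil_append]
    exact List.IsRotated.refl _
  have hr2 : (s ++ p :: t) ~r ((m2 ++ [p]) ++ (m1 ++ [q])) := hr1.trans List.isRotated_append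
  refine ⟨m1 ++ [q], m2 ++ [p], hr1, ?_, by simp, ?_, by simp⟩
  · rw [List.formPerm_eq_of_isRotated hn hr1]
    cases m1 with
    | nil => have := List.formPerm_apply_getLast q (m2 ++ [p]); simpa using this.symm
    | cons a m1 =>
      have := List.formPerm_apply_getLast a (m1 ++ [q] ++ (m2 ++ [p])); simpa using this.symm
  · rw [List.formPerm_eq_of_isRotated hn hr2]
    cases m2 with
    | nil => have := List.formPerm_apply_getLast p (m1 ++ [q]); simpa using this.symm
    | cons a m2 =>
      have := List.formPerm_apply_getLast a (m2 ++ [p] ++ (m1 ++ [q])); simpa using this.symm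

theorem cyc_open {V : Type*} [DecidableEq V] {l : List V} (hn : l.Nodup) {p : V}
    (hp : p ∈ l) :
    ∃ l1 : List V, l ~r l1 ∧ l1.head? = some (l.formPerm p) ∧ l1.getLast? = some p := by
  obtain ⟨s, t, rfl⟩ := List.append_of_mem hp
  have hr1 : (s ++ p :: t) ~r (t ++ (s ++ [p])) := by
    have : s ++ p :: t = (s ++ [p]) ++ t := by simp
    rw [this]; exact List.isRotated_append
  refine ⟨_, hr1, ?_, by simp⟩
  rw [List.formPerm_eq_of_isRotated hn hr1]
  rw [← List.append_assoc]
  generalize t ++ s = m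
  cases m with
  | nil => simp
  | cons a m =>
      have := List.formPerm_apply_getLast a (m ++ [p]); simpa using this.symm

/-- A path (as a list) in `G` from `a` to `b`. -/
def PathList {V : Type*} (G : SimpleGraph V) (a b : V) (z : List V) : Prop :=
  z.Nodup ∧ List.IsChain G.Adj z ∧ z.head? = some a ∧ z.getLast? = some b

theorem ext_one {V : Type*} [DecidableEq V] {G : SimpleGraph V} {l : List V} (hl : CycList G l)
    (hmax : ∀ l', CycList G l' → l'.length ≤ l.length) {p a b : V} (hp : p ∈ l) {z : List V}
    (hz : PathList G a b z) (hd : ∀ v ∈ z, v ∉ l) (h1 : G.Adj p a)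
    (h2 : G.Adj b (l.formPerm p)) : False := by
  obtain ⟨l1, hr, hh, ht⟩ := cyc_open hl.1 hp
  have hl1 := hl.rot hr
  obtain ⟨z1, z2, z3, z4⟩ := hz
  have hlen := hr.perm.length_eq
  have hzlen : 0 < z.length := by cases z <;> simp_all
  have := hmax (l1 ++ z) ⟨?_, ?_, ?_⟩
  · simp at this; omega
  · rw [List.nodup_append]
    refine ⟨hl1.1, z1, fun x hx y hy hxy => hd y hy (hr.mem_iff.2 (hxy ▸ hx))⟩
  · have := hl1.2.1; simp; omega
  · have := hl1.2.2
    simp [List.isChain_append, List.head?_append, List.getLast?_append, *] at this ⊢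
    tauto

theorem ext_two {V : Type*} [DecidableEq V] {G : SimpleGraph V} {l : List V} (hl : CycList G l)
    (hmax : ∀ l', CycList G l' → l'.length ≤ l.length) {p q a b : V} (hp : p ∈ l) (hq : q ∈ l)
    (hpq : p ≠ q) {z d : List V}
    (hz : PathList G a b z) (hzl : ∀ v ∈ z, v ∉ l) (h1 : G.Adj (l.formPerm q) a)
    (h2 : G.Adj b (l.formPerm p))
    (hd : (d = [] ∧ G.Adj q p) ∨ ∃ a' b', PathList G a' b' d ∧ G.Adj q a' ∧ G.Adj b' p)
    (hdl : ∀ v ∈ d, v ∉ l) (hdz : ∀ v ∈ d, v ∉ z) : False := by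
  obtain ⟨l1, l2, hr, hh1, ht1, hh2, ht2⟩ := cyc_split hl.1 hp hq hpq
  have hl1 := hl.rot hr
  obtain ⟨z1, z2, z3, z4⟩ := hz
  have hlen := hr.perm.length_eq
  have hzlen : 0 < z.length := by cases z <;> simp_all
  have hmem : ∀ v, v ∈ l ↔ v ∈ l1 ∨ v ∈ l2 := fun v => by rw [hr.mem_iff]; simp
  have hdn : d.Nodup := by
    rcases hd with ⟨rfl, -⟩ | ⟨a', b', h, -⟩
    · simp
    · exact h.1
  have := hmax (l1 ++ (d ++ (l2.reverse ++ z))) ⟨?_, ?_, ?_⟩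
  · simp at this hlen; omega
  · have := hl1.1
    simp only [List.nodup_append, List.nodup_reverse, List.mem_append, List.mem_reverse] at this ⊢
    grind
  · have := hl1.2.1; simp at this ⊢; omega
  · have := hl1.2.2
    have hrev : List.IsChain G.Adj l2.reverse := by
      rw [List.isChain_reverse]
      simp only [List.isChain_append] at this
      have h := this.1.2.1
      simpa [flip, G.adj_comm] using h
    rcases hd with ⟨rfl, h⟩ | ⟨a', b', ⟨d1, d2, d3, d4⟩, h, h'⟩
    · simp [List.isChain_append, List.head?_append, List.getLast?_append, *] at this ⊢
      tauto
    · simp [List.isChain_append, List.head?_append, List.getLast?_append, *] at this ⊢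
      tauto

theorem walk_cycList {V : Type*} [DecidableEq V] {G : SimpleGraph V} {u : V} {C : G.Walk u u}
    (hC : C.IsCycle) :
    CycList G C.support.tail ∧ C.support.tail.length = C.length ∧
      (∀ v, v ∈ C.support.tail ↔ v ∈ C.support) ∧
      ∀ a b, s(a, b) ∈ C.edges →
        C.support.tail.formPerm a = b ∨ C.support.tail.formPerm b = a := by
  have hlen : C.support.tail.length = C.length := by simp
  have h3 := hC.three_le_length
  have hsup : C.support = u :: C.support.tail := by simp
  have hlast : C.support.tail.getLast? = some u := by
    have h : C.support.getLast? = some u := by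
      rw [List.getLast?_eq_getLast_of_ne_nil C.support_ne_nil]; simp
    rw [hsup] at h
    rw [List.getLast?_cons] at h
    cases hh : C.support.tail.getLast? with
    | none => rw [List.getLast?_eq_none_iff] at hh; rw [hh] at hlen; simp at hlen; omega
    | some x => rw [hh] at h; simpa using h
  have hch := C.isChain_adj_support
  rw [hsup] at hch
  have hcyc : CycList G C.support.tail := by
    refine ⟨hC.support_nodup, by omega, ?_⟩
    rw [List.isChain_append]
    rw [List.isChain_cons] at hch
    refine ⟨hch.2, hch.2, ?_⟩
    rw [hlast]
    simpa using hch.1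
  have hinf : ∀ a b, [a, b] <:+: C.support → C.support.tail.formPerm a = b := by
    intro a b h
    rw [hsup] at h
    generalize C.support.tail = l at *
    have hn := hcyc.1
    obtain ⟨s, t, h⟩ := h
    cases s with
    | nil =>
      simp at h
      obtain ⟨rfl, rfl⟩ := h
      have := List.formPerm_apply_getLast b t
      rw [List.getLast?_eq_getLast_of_ne_nil (by simp)] at hlast
      simp only [Option.some.injEq] at hlast
      rwa [hlast] at this
    | cons x s =>
      simp at h
      obtain ⟨rfl, rfl⟩ := h
      have hr : (s ++ a :: b :: t) ~r (a :: b :: t ++ s) := List.isRotated_append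
      rw [List.formPerm_eq_of_isRotated hn hr]
      exact List.formPerm_apply_head a b (t ++ s) (by simpa using hr.nodup_iff.1 hn)
  refine ⟨hcyc, hlen, fun v => ?_, fun a b h => ?_⟩
  · constructor
    · exact List.mem_of_mem_tail
    · intro h
      rw [hsup] at h
      rcases List.mem_cons.1 h with rfl | h
      · exact List.mem_of_mem_getLast? hlast
      · exact h
  · rw [← Walk.infix_support_iff_mem_edges] at h
    exact h.imp (hinf _ _) (hinf _ _)

/-- The graph `G` with all edges touching `S` removed. -/
def avoidGraph {V : Type*} (G : SimpleGraph V) (S : Set V) : SimpleGraph V where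
  Adj a b := G.Adj a b ∧ a ∉ S ∧ b ∉ S
  symm := ⟨fun _ _ h => ⟨h.1.symm, h.2.2, h.2.1⟩⟩
  loopless := ⟨fun _ h => h.1.ne rfl⟩

theorem avoid_notMem {V : Type*} {G : SimpleGraph V} {S : Set V} {a b : V}
    (h : (avoidGraph G S).Reachable a b) (ha : a ∉ S) : b ∉ S := by
  obtain ⟨w⟩ := h
  induction w with
  | nil => exact ha
  | cons h _ ih => exact ih h.2.2

theorem avoid_path {V : Type*} {G : SimpleGraph V} {S : Set V} {a b : V}
    (h : (avoidGraph G S).Reachable a b) :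
    ∃ z, PathList G a b z ∧ ∀ v ∈ z, (avoidGraph G S).Reachable a v := by
  classical
  obtain ⟨w, hw⟩ := h.exists_isPath
  refine ⟨w.support, ⟨hw.support_nodup, ?_, ?_, ?_⟩, fun v hv => ⟨w.takeUntil v hv⟩⟩
  · exact w.isChain_adj_support.imp fun a b h => h.1
  · rw [List.head?_eq_some_head w.support_ne_nil]; simp
  · rw [List.getLast?_eq_getLast_of_ne_nil w.support_ne_nil]; simp

theorem sep_adj {V : Type*} {G : SimpleGraph V} (h3 : ThreeConnected G) (T N : Set V)
    (hN : N.ncard ≤ 2) {t w : V} (ht : t ∈ T) (htN : t ∉ N) (hw : w ∉ T) (hwN : w ∉ N) :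
    ∃ a b, G.Adj a b ∧ a ∈ T ∧ b ∉ T ∧ b ∉ N := by
  by_contra! hcon
  have hc := h3.2 N hN
  have key : ∀ (x y : (Nᶜ : Set V)), (G.induce Nᶜ).Reachable x y → x.1 ∈ T → y.1 ∈ T := by
    rintro x y ⟨p⟩
    induction p with
    | nil => exact id
    | @cons a b c h _ ih =>
      intro hx
      apply ih
      by_contra hb
      exact b.2 (hcon a.1 b.1 h hx hb)
  exact hw (key ⟨t, htN⟩ ⟨w, hwN⟩ (hc.preconnected _ _) ht)

/-- The two sides of a bond, relative to a vertex:
every vertex is on exactly one side, and no bond edge stays on the side of that vertex. -/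
theorem bond_sides {V : Type*} {G : SimpleGraph V} (hG : G.Connected) {B : Set (Sym2 V)}
    (hB : IsBond G B) (u : V) :
    (∀ b ∈ B, (G.deleteEdges (B \ {b})).Connected) ∧
    ∃ y : V, (∀ v, (G.deleteEdges B).Reachable u v ∨ (G.deleteEdges B).Reachable y v) ∧
      (∀ v, (G.deleteEdges B).Reachable y v → ¬ (G.deleteEdges B).Reachable u v) ∧
      ∀ a b, s(a, b) ∈ B → (G.deleteEdges B).Reachable u a → (G.deleteEdges B).Reachable u b →
        False := by
  obtain ⟨hne, ⟨hsub, hdis⟩, hmin⟩ := hB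
  have hcon : ∀ b ∈ B, (G.deleteEdges (B \ {b})).Connected := by
    intro b hb
    by_cases h : (B \ {b}).Nonempty
    · have := hmin (B \ {b}) ⟨Set.diff_subset, fun h => (h hb).2 rfl⟩ h
      by_contra hc
      exact this ⟨Set.diff_subset.trans hsub, hc⟩
    · rw [Set.not_nonempty_iff_eq_empty.1 h]
      simpa using hG
  have hall : ∀ x y, s(x, y) ∈ B → ∀ v, (G.deleteEdges B).Reachable x v ∨
      (G.deleteEdges B).Reachable y v := by
    intro x y hb v
    obtain ⟨w⟩ := (hcon _ hb).preconnected v x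
    have : ∀ a b (w : (G.deleteEdges (B \ {s(x, y)})).Walk a b),
        ((G.deleteEdges B).Reachable x b ∨ (G.deleteEdges B).Reachable y b) →
        ((G.deleteEdges B).Reachable x a ∨ (G.deleteEdges B).Reachable y a) := by
      intro a b w
      induction w with
      | nil => exact id
      | @cons a b c h _ ih =>
        intro hc
        have hb' := ih hc
        rw [deleteEdges_adj] at h
        by_cases he : s(a, b) = s(x, y)
        · rcases Sym2.eq_iff.1 he with ⟨rfl, rfl⟩ | ⟨rfl, rfl⟩
          · exact Or.inl (Reachable.refl _)
          · exact Or.inr (Reachable.refl _)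
        · have hadj : (G.deleteEdges B).Adj b a := by
            rw [deleteEdges_adj, G.adj_comm, Sym2.eq_swap]
            exact ⟨h.1, fun hB => h.2 ⟨hB, he⟩⟩
          exact hb'.imp (fun r => r.trans hadj.reachable) (fun r => r.trans hadj.reachable)
    exact this _ _ w (Or.inl (Reachable.refl _))
  have hnot : ∀ a b, s(a, b) ∈ B → (G.deleteEdges B).Reachable u a →
      (G.deleteEdges B).Reachable u b → False := by
    intro a b hb ha hb'
    apply hdis
    haveI : Nonempty V := ⟨u⟩
    refine ⟨fun v w => ?_⟩
    have : ∀ v, (G.deleteEdges B).Reachable u v := fun v =>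
      (hall a b hb v).elim (ha.trans) (hb'.trans)
    exact (this v).symm.trans (this w)
  refine ⟨hcon, ?_⟩
  obtain ⟨e, he⟩ := hne
  induction e using Sym2.ind with
  | _ x y =>
    have main : ∀ x y, s(x, y) ∈ B → (G.deleteEdges B).Reachable x u →
        ∃ y : V, (∀ v, (G.deleteEdges B).Reachable u v ∨ (G.deleteEdges B).Reachable y v) ∧
        (∀ v, (G.deleteEdges B).Reachable y v → ¬ (G.deleteEdges B).Reachable u v) := by
      intro x y he hx
      refine ⟨y, fun v => (hall x y he v).imp (hx.symm.trans) id, fun v hv huv => ?_⟩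
      exact hnot x y he hx.symm (huv.trans hv.symm)
    rcases hall x y he u with h | h
    · obtain ⟨y, h1, h2⟩ := main x y he h
      exact ⟨y, h1, h2, hnot⟩
    · obtain ⟨y, h1, h2⟩ := main y x (by rwa [Sym2.eq_swap]) h
      exact ⟨y, h1, h2, hnot⟩

/-- Deleting three well-chosen edges keeps the graph connected and leaves a cycle,
so there are too many edges. -/
theorem count_edges {V : Type*} [Fintype V] {G : SimpleGraph V} {B : Set (Sym2 V)} {b : Sym2 V}
    (hb : b ∈ B) (hBG : B ⊆ G.edgeSet) (hm : G.edgeSet.ncard ≤ B.ncard + Nat.card V + 1)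
    {F : Set (Sym2 V)} (hF : F.ncard = 3) (hFG : F ⊆ G.edgeSet) (hFB : ∀ f ∈ F, f ∉ B)
    (hcon : (G.deleteEdges ((B \ {b}) ∪ F)).Connected) {u : V} (C : G.Walk u u) (hC : C.IsCycle)
    (hCF : ∀ e ∈ C.edges, e ∉ (B \ {b}) ∪ F) : False := by
  have hfin : ∀ S : Set (Sym2 V), S.Finite := fun S => Set.toFinite S
  have h1 : ((B \ {b}) ∪ F).ncard = (B \ {b}).ncard + F.ncard :=
    Set.ncard_union_eq (Set.disjoint_left.2 fun x hx hxF => hFB x hxF hx.1) (hfin _) (hfin _)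
  have h2 := Set.ncard_diff_singleton_add_one hb (hfin B)
  have h3 := Set.ncard_diff_add_ncard_of_subset
    (Set.union_subset (Set.diff_subset.trans hBG) hFG : (B \ {b}) ∪ F ⊆ G.edgeSet) (hfin _)
  have h4 := hcon.card_vert_le_card_edgeSet_add_one
  have h5 : Nat.card (G.deleteEdges ((B \ {b}) ∪ F)).edgeSet =
      (G.edgeSet \ ((B \ {b}) ∪ F)).ncard := by
    rw [edgeSet_deleteEdges]; rfl
  have ht : (G.deleteEdges ((B \ {b}) ∪ F)).IsTree := by
    rw [isTree_iff_connected_and_card]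
    exact ⟨hcon, by omega⟩
  refine ht.IsAcyclic (C.transfer _ fun e he => ?_) (hC.transfer _)
  rw [edgeSet_deleteEdges]
  exact ⟨C.edges_subset_edgeSet he, hCF e he⟩

/-- if a simple 3-connected graph with `n` vertices and `m` edges has a largest
bond of size at least `m - n - 1`, then every longest cycle meets every largest bond. -/
theorem longest_cycle_meets_largest_bond_of_costar {V : Type*} [Fintype V] (G : SimpleGraph V)
    (h3 : ThreeConnected G)
    (hbig : ∃ B₀ : Set (Sym2 V), IsBond G B₀ ∧
      G.edgeSet.ncard ≤ B₀.ncard + Nat.card V + 1)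
    (u : V) (C : G.Walk u u) (hC : IsLongestCycle G C)
    (B : Set (Sym2 V)) (hB : IsLargestBond G B) :
    ∃ e ∈ C.edges, e ∈ B := by
  classical
  by_contra! hno
  obtain ⟨B₀, hB₀, hm⟩ := hbig
  replace hm : G.edgeSet.ncard ≤ B.ncard + Nat.card V + 1 := by
    have := hB.2 B₀ hB₀; omega
  have hG : G.Connected := by
    haveI : Nonempty V := ⟨u⟩
    refine ⟨fun a b => ?_⟩
    have := (h3.2 ∅ (by simp)).preconnected ⟨a, by simp⟩ ⟨b, by simp⟩
    exact this.map (Embedding.induce _).toHom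
  obtain ⟨hcon, y, hall, hdisj, hnot⟩ := bond_sides hG hB.1 u
  obtain ⟨hl, hlen, hsup, hedge⟩ := walk_cycList hC.1
  have hmax : ∀ l', CycList G l' → l'.length ≤ C.support.tail.length := by
    intro l' hl'
    obtain ⟨v, D, hD, hDl⟩ := hl'.toCycle
    have := hC.2 v D hD
    omega
  -- all vertices of `C` are on the side of `u`
  have hCX : ∀ v ∈ C.support, (G.deleteEdges B).Reachable u v := by
    intro v hv
    have hw : ∀ e ∈ C.edges, e ∈ (G.deleteEdges B).edgeSet := by
      intro e he
      rw [edgeSet_deleteEdges]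
      exact ⟨C.edges_subset_edgeSet he, hno e he⟩
    exact ⟨(C.transfer _ hw).takeUntil v (by simpa using hv)⟩
  have hCtr : ∀ (H : SimpleGraph V), (∀ e ∈ C.edges, e ∈ H.edgeSet) →
      ∀ v ∈ C.support, H.Reachable u v := fun H hw v hv =>
    ⟨(C.transfer _ hw).takeUntil v (by simpa using hv)⟩
  generalize C.support.tail = l at hl hlen hsup hedge hmax
  set σ := l.formPerm with hσ
  set S : Set V := {v | v ∈ l} with hS
  set K := avoidGraph G S with hK
  have hyS : y ∉ S := fun h => hdisj y (Reachable.refl _) (hCX y ((hsup y).1 h))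
  have hYZ : ∀ v, (G.deleteEdges B).Reachable y v → K.Reachable y v := by
    rintro v ⟨w⟩
    have : ∀ a b (w : (G.deleteEdges B).Walk a b), (G.deleteEdges B).Reachable y a →
        K.Reachable a b := by
      intro a b w
      induction w with
      | nil => exact fun _ => Reachable.refl _
      | @cons a b c h _ ih =>
        intro ha
        have hb := ha.trans h.reachable
        have hadj : K.Adj a b := ⟨(deleteEdges_adj.1 h).1,
          fun hs => hdisj _ ha (hCX _ ((hsup _).1 hs)),
          fun hs => hdisj _ hb (hCX _ ((hsup _).1 hs))⟩
        exact hadj.reachable.trans (ih hb)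
    exact this _ _ w (Reachable.refl _)
  have hX : ∀ v, ¬ K.Reachable y v → (G.deleteEdges B).Reachable u v := fun v hv =>
    (hall v).resolve_right fun h => hv (hYZ v h)
  have hZS : ∀ v, K.Reachable y v → v ∉ S := fun v h => avoid_notMem h hyS
  -- attachments of the component of `y`
  set A : Set V := {a | a ∈ S ∧ ∃ z, K.Reachable y z ∧ G.Adj z a} with hA
  have hZpath : ∀ a ∈ A, ∀ b ∈ A, ∃ z x x', PathList G x x' z ∧
      (∀ v ∈ z, K.Reachable y v) ∧ G.Adj a x ∧ G.Adj x' b := by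
    rintro a ⟨-, x, hx, hxa⟩ b ⟨-, x', hx', hxb⟩
    obtain ⟨z, hz, hzr⟩ := avoid_path (hx.symm.trans hx')
    exact ⟨z, x, x', hz, fun v hv => hx.trans (hzr v hv), hxa.symm, hxb⟩
  have hA3 : 2 < A.ncard := by
    by_contra! hle
    have hScard : S.ncard = l.length := by
      have : S = (l.toFinset : Set V) := by ext; simp [hS]
      rw [this, Set.ncard_coe_finset, List.toFinset_card_of_nodup hl.1]
    have : ∃ p ∈ S, p ∉ A := by
      by_contra! hsub
      have := Set.ncard_le_ncard (show S ⊆ A from hsub) (Set.toFinite _)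
      have := hl.2.1
      omega
    obtain ⟨p, hp, hpA⟩ := this
    obtain ⟨a, b, hab, ha, hb, hbA⟩ := sep_adj h3 {v | K.Reachable y v} A hle
      (t := y) (w := p) (Reachable.refl _) (fun h => hyS h.1) (fun h => hZS p h hp) hpA
    by_cases hbS : b ∈ S
    · exact hbA ⟨hbS, a, ha, hab⟩
    · exact hb (Reachable.trans ha (Adj.reachable (show K.Adj a b from ⟨hab, hZS a ha, hbS⟩)))
  -- predecessors of attachments
  set P : Set V := {p | σ p ∈ A} with hP
  have hPS : ∀ p ∈ P, p ∈ l := fun p hp => List.mem_of_formPerm_apply_mem hp.1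
  have hPA : ∀ p ∈ P, p ∉ A := by
    intro p hp hpA
    obtain ⟨z, x, x', hz, hzr, h1, h2⟩ := hZpath p hpA _ hp
    exact ext_one hl hmax (hPS p hp) hz (fun v hv => hZS v (hzr v hv)) h1 h2
  have hPchord : ∀ p ∈ P, ∀ q ∈ P, ¬ G.Adj q p := by
    intro p hp q hq hadj
    obtain ⟨z, x, x', hz, hzr, h1, h2⟩ := hZpath _ hq _ hp
    exact ext_two hl hmax (hPS p hp) (hPS q hq) hadj.ne' hz (fun v hv => hZS v (hzr v hv)) h1 h2
      (d := []) (Or.inl ⟨rfl, hadj⟩) (by simp) (by simp)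
  have hPD : ∀ p ∈ P, ∀ q ∈ P, p ≠ q → ∀ w d, w ∉ S → ¬ K.Reachable y w → K.Reachable w d →
      G.Adj p w → ¬ G.Adj q d := by
    intro p hp q hq hpq w d hwS hwZ hwd hpw hqd
    obtain ⟨z, x, x', hz, hzr, h1, h2⟩ := hZpath _ hq _ hp
    obtain ⟨dl, hdl, hdr⟩ := avoid_path hwd.symm
    refine ext_two hl hmax (hPS p hp) (hPS q hq) hpq hz (fun v hv => hZS v (hzr v hv)) h1 h2
      (d := dl) (Or.inr ⟨d, w, hdl, hqd, hpw.symm⟩) ?_ ?_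
    · intro v hv
      have hvS : v ∉ S := avoid_notMem (hwd.trans (hdr v hv)) hwS
      exact hvS
    · intro v hv hvz
      exact hwZ ((hzr v hvz).trans (hwd.trans (hdr v hv)).symm)
  have hP3 : 2 < P.ncard := by
    have : P = σ.symm '' A := by
      ext p
      simp [hP, Equiv.symm_apply_eq]
    rw [this, Set.ncard_image_of_injective _ σ.symm.injective]
    exact hA3
  -- a third neighbour for each `p`
  have hthird : ∀ p ∈ P, ∃ w, G.Adj p w ∧ s(p, w) ∉ C.edges := by
    intro p hp
    have hN : ({σ p, σ.symm p} : Set V).ncard ≤ 2 := (Set.ncard_insert_le _ _).trans (by simp)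
    have hpn : p ∉ ({σ p, σ.symm p} : Set V) := by
      have hne : σ p ≠ p := fun h => hPA p hp (by have : σ p ∈ A := hp; rwa [h] at this)
      rintro (h | h)
      · exact hne h.symm
      · exact hne (by rw [Set.mem_singleton_iff, Equiv.eq_symm_apply] at h; exact h)
    have : ∃ w, w ∉ ({p, σ p, σ.symm p} : Set V) := by
      by_contra! hc
      have h4 := h3.1
      have : ({p, σ p, σ.symm p} : Set V) = Set.univ := Set.eq_univ_of_forall hc
      have h5 := Set.ncard_insert_le p ({σ p, σ.symm p} : Set V)
      rw [this, Set.ncard_univ] at h5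
      omega
    obtain ⟨w, hw⟩ := this
    obtain ⟨a, b, hab, ha, hb, hbN⟩ := sep_adj h3 {p} {σ p, σ.symm p} hN (t := p) (w := w)
      rfl hpn (fun h => hw (Or.inl h)) (fun h => hw (Or.inr h))
    obtain rfl : a = p := ha
    refine ⟨b, hab, fun he => hbN ?_⟩
    rcases hedge _ _ he with h | h
    · exact Or.inl h.symm
    · exact Or.inr (by rw [Set.mem_singleton_iff, Equiv.eq_symm_apply]; exact h)
  choose! t ht htC using hthird
  have htP : ∀ p ∈ P, t p ∉ P := fun p hp h => hPchord _ h p hp (ht p hp)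
  have htZ : ∀ p ∈ P, ¬ K.Reachable y (t p) := fun p hp h =>
    hPA p hp ⟨hPS p hp, t p, h, (ht p hp).symm⟩
  obtain ⟨Q, hQP, hQ3⟩ := Set.exists_subset_card_eq (s := P) (n := 3) hP3
  set F : Set (Sym2 V) := (fun p => s(p, t p)) '' Q with hF
  have hF3 : F.ncard = 3 := by
    rw [hF, Set.ncard_image_of_injOn, hQ3]
    intro p hp q hq h
    rcases Sym2.eq_iff.1 h with ⟨h, -⟩ | ⟨h, h'⟩
    · exact h
    · exact absurd (hQP hp) (h ▸ htP q (hQP hq))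
  have hFG : F ⊆ G.edgeSet := by
    rintro _ ⟨p, hp, rfl⟩
    exact ht p (hQP hp)
  have hFC : ∀ e ∈ C.edges, e ∉ F := by
    rintro e he ⟨p, hp, rfl⟩
    exact htC p (hQP hp) he
  have hSX : ∀ v ∈ S, (G.deleteEdges B).Reachable u v := fun v hv => hCX v ((hsup v).1 hv)
  have hFB : ∀ f ∈ F, f ∉ B := by
    rintro _ ⟨p, hp, rfl⟩ hfB
    exact hnot _ _ hfB (hSX p (hPS p (hQP hp))) (hX _ (htZ p (hQP hp)))
  obtain ⟨b, hb⟩ := hB.1.1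
  have hCF : ∀ e ∈ C.edges, e ∉ (B \ {b}) ∪ F := by
    rintro e he (h | h)
    · exact hno e he h.1
    · exact hFC e he h
  refine count_edges hb hB.1.2.1.1 hm hF3 hFG hFB ?_ C hC.1 hCF
  set H := G.deleteEdges ((B \ {b}) ∪ F) with hH
  have hSr : ∀ v ∈ S, H.Reachable v u := by
    intro v hv
    refine (hCtr H (fun e he => ?_) v ((hsup v).1 hv)).symm
    rw [hH, edgeSet_deleteEdges]
    exact ⟨C.edges_subset_edgeSet he, hCF e he⟩
  -- the far end of a deleted edge
  have htr : ∀ p ∈ Q, H.Reachable (t p) u := by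
    intro p hp
    have hpP := hQP hp
    by_cases htS : t p ∈ S
    · exact hSr _ htS
    obtain ⟨q, hq, hqp⟩ : ∃ q ∈ P, q ≠ p := by
      by_contra! hc
      have : P ⊆ {p} := hc
      have := Set.ncard_le_ncard this (Set.toFinite _)
      rw [Set.ncard_singleton] at this
      omega
    have hDS : ∀ v, K.Reachable (t p) v → v ∉ S := fun v h => avoid_notMem h htS
    have hDZ : ∀ v, K.Reachable (t p) v → ¬ K.Reachable y v := fun v h h' =>
      htZ p hpP (h'.trans h.symm)
    obtain ⟨d, c, hdc, hd, hc, hcp⟩ := sep_adj h3 {v | K.Reachable (t p) v} {p} (by simp)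
      (t := t p) (w := q) (Reachable.refl _) (ht p hpP).ne' (fun h => hDS q h (hPS q hq)) hqp
    have hcS : c ∈ S := by
      by_contra hcS
      exact hc (Reachable.trans hd
        (Adj.reachable (show K.Adj d c from ⟨hdc, hDS d hd, hcS⟩)))
    have hcP : c ∉ P := fun hcP => hPD p hpP c hcP (fun h => hcp h.symm) (t p) d htS
      (htZ p hpP) hd (ht p hpP) hdc.symm
    have hadjH : ∀ a b, G.Adj a b → K.Reachable (t p) a →
        ((G.deleteEdges B).Reachable u b) → b ∉ P → H.Adj a b := by
      intro a b' hab ha hbX hbP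
      rw [hH, deleteEdges_adj]
      refine ⟨hab, ?_⟩
      rintro (h | ⟨p', hp', h⟩)
      · exact hnot _ _ h.1 (hX a (hDZ a ha)) hbX
      · rcases Sym2.eq_iff.1 h with ⟨h, -⟩ | ⟨h, -⟩
        · exact hDS a ha (h ▸ hPS p' (hQP hp'))
        · exact hbP (h ▸ hQP hp')
    have hwalk : ∀ a b (w : K.Walk a b), K.Reachable (t p) a → H.Reachable a b := by
      intro a b w
      induction w with
      | nil => exact fun _ => Reachable.refl _
      | @cons a b c h _ ih =>
        intro ha
        have hb := ha.trans h.reachable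
        exact (hadjH a b h.1 ha (hX b (hDZ b hb))
          (fun hbP => hDS b hb (hPS b hbP))).reachable.trans (ih hb)
    obtain ⟨w⟩ := id hd
    exact (hwalk _ _ w (Reachable.refl _)).trans
      ((hadjH d c hdc hd (hSX c hcS) hcP).reachable.trans (hSr c hcS))
  have hfin : ∀ v, H.Reachable v u := by
    intro v
    obtain ⟨w⟩ := (hcon b hb).preconnected v u
    induction w with
    | nil => exact Reachable.refl _
    | @cons a c _ h _ ih =>
      rw [deleteEdges_adj] at h
      by_cases hF' : s(a, c) ∈ F
      · obtain ⟨p, hp, hpe⟩ := hF'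
        rcases Sym2.eq_iff.1 hpe with ⟨h, -⟩ | ⟨-, h⟩
        · exact hSr _ (h ▸ hPS p (hQP hp))
        · exact h ▸ htr p hp
      · refine (Adj.reachable (show H.Adj a c from ?_)).trans ?_
        · rw [hH, deleteEdges_adj]
          exact ⟨h.1, fun hh => hh.elim h.2 hF'⟩
        · apply ih <;> assumption
  haveI : Nonempty V := ⟨u⟩
  exact ⟨fun v w => (hfin v).trans (hfin w).symm⟩
end

section
/- There exists a simple 2-connected graph G and a longest cycle C of G and a largest bond B of G such that C and B share no edge. -/
open SimpleGraph

namespace CE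

/-- The butterfly with centre 0 and triangles 0,1,2 and 0,3,4, with 1 and 3 joined by two
paths of length four. -/
def E : List (Fin 11 × Fin 11) :=
  [(0,1),(0,2),(1,2),(0,3),(0,4),(3,4),(1,5),(5,6),(6,7),(7,3),(1,8),(8,9),(9,10),(10,3)]

def G : SimpleGraph (Fin 11) where
  Adj u v := (u, v) ∈ E ∨ (v, u) ∈ E
  symm := ⟨fun _ _ h => h.symm⟩
  loopless := ⟨by decide⟩

instance : DecidableRel G.Adj := fun u v => inferInstanceAs (Decidable ((u, v) ∈ E ∨ (v, u) ∈ E))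

/-- A graph is connected if every colouring constant along edges is constant. -/
lemma conn_of {V : Type*} [Nonempty V] (H : SimpleGraph V)
    (h : ∀ c : V → Prop, (∀ u v, H.Adj u v → (c u ↔ c v)) → ∀ u v, c u → c v) :
    H.Connected := by
  refine ⟨fun u v => ?_⟩
  refine h (fun w => H.Reachable u w) ?_ u v (Reachable.refl u)
  intro a b hab
  exact ⟨fun k => k.trans hab.reachable, fun k => k.trans hab.symm.reachable⟩

lemma colour_of_not_conn {V : Type*} [Nonempty V] (H : SimpleGraph V) (h : ¬ H.Connected) :
    ∃ c : V → Prop, (∀ u v, H.Adj u v → (c u ↔ c v)) ∧ ∃ u v, c u ∧ ¬ c v := by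
  by_contra k
  push Not at k
  exact h (conn_of H fun c hc u v hu => k c hc u v hu)

lemma not_conn_of_colour {V : Type*} (H : SimpleGraph V) (c : V → Prop)
    (hc : ∀ u v, H.Adj u v → (c u ↔ c v)) (u v : V) (hu : c u) (hv : ¬ c v) :
    ¬ H.Connected := by
  intro h
  obtain ⟨w⟩ := h.preconnected u v
  apply hv
  clear hv
  induction w with
  | nil => exact hu
  | cons hab _ ih => exact ih ((hc _ _ hab).1 hu)

lemma forall_adj {P : Fin 11 → Fin 11 → Prop} (h : ∀ u v, G.Adj u v → P u v) :
    P 0 1 ∧ P 0 2 ∧ P 1 2 ∧ P 0 3 ∧ P 0 4 ∧ P 3 4 ∧ P 1 5 ∧ P 5 6 ∧ P 6 7 ∧ P 7 3 ∧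
      P 1 8 ∧ P 8 9 ∧ P 9 10 ∧ P 10 3 := by
  refine ⟨?_, ?_, ?_, ?_, ?_, ?_, ?_, ?_, ?_, ?_, ?_, ?_, ?_, ?_⟩ <;> exact h _ _ (by decide)

lemma colour_off (a : Fin 11) : ∀ c : Fin 11 → Prop,
    (∀ u v, G.Adj u v → u ≠ a → v ≠ a → (c u ↔ c v)) → ∀ u v, u ≠ a → v ≠ a → (c u ↔ c v) := by
  intro c h
  have h2 := forall_adj h
  have key : ∃ b, ∀ u, u ≠ a → (c u ↔ b) := by
    refine ⟨if a = 0 then c 1 else c 0, ?_⟩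
    clear h
    fin_cases a <;> simp at h2 ⊢ <;> intro u hu <;> fin_cases u <;> simp at hu ⊢ <;> grind
  obtain ⟨b, hb⟩ := key
  intro u v hu hv
  rw [hb u hu, hb v hv]

lemma twoConn : TwoConnected G := by
  refine ⟨by simp, fun s hs => ?_⟩
  obtain ⟨a, ha⟩ : ∃ a, s ⊆ {a} := by
    rcases s.eq_empty_or_nonempty with rfl | ⟨a, ha⟩
    · exact ⟨0, by simp⟩
    · exact ⟨a, fun b hb => (Set.ncard_le_one s.toFinite).1 hs b hb a ha⟩
  obtain ⟨b, hb⟩ : ∃ b : Fin 11, b ≠ a := exists_ne a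
  have : Nonempty (sᶜ : Set (Fin 11)) := ⟨⟨b, fun h => hb (ha h)⟩⟩
  rcases s.eq_empty_or_nonempty with h0 | ⟨a', ha'⟩
  · subst h0
    apply conn_of
    intro c hc
    have h := forall_adj (P := fun u v => c ⟨u, by simp⟩ ↔ c ⟨v, by simp⟩)
      (fun u v huv => hc _ _ huv)
    have key : ∀ u : Fin 11, c ⟨u, by simp⟩ ↔ c ⟨0, by simp⟩ := by
      intro u
      fin_cases u <;> simp at h ⊢ <;> grind
    rintro ⟨u, hu⟩ ⟨v, hv⟩ h
    exact (key v).2 ((key u).1 h)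
  · obtain rfl : s = {a} := by
      apply Set.Subset.antisymm ha
      have : a' = a := ha ha'
      simpa [← this] using ha'
    apply conn_of
    intro c hc
    rintro ⟨u, hu⟩ ⟨v, hv⟩ h
    have := colour_off a (fun u => ∃ h : u ≠ a, c ⟨u, h⟩) (by
      intro u v huv hu hv
      have := hc ⟨u, hu⟩ ⟨v, hv⟩ huv
      simp only [hu, hv, exists_true_left, ne_eq, not_false_eq_true]
      exact this) u v hu hv
    obtain ⟨_, h⟩ := this.1 ⟨hu, h⟩
    exact h

def bond : Set (Sym2 (Fin 11)) := {e | e ∈ G.edgeSet ∧ (0 : Fin 11) ∈ e}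

lemma bond_eq : bond = ({s(0,1), s(0,2), s(0,3), s(0,4)} : Finset (Sym2 (Fin 11))) := by
  ext e
  induction e with | _ u v
  simp only [bond, Set.mem_ofPred_eq, mem_edgeSet, Finset.mem_coe]
  revert u v
  decide

lemma bond_card : bond.ncard = 4 := by
  rw [bond_eq, Set.ncard_coe_finset]; decide

lemma cut_of_colour (T : Set (Sym2 (Fin 11))) (hT : T ⊆ G.edgeSet) (c : Fin 11 → Prop)
    (hc : ∀ u v, G.Adj u v → s(u,v) ∉ T → (c u ↔ c v)) (u v) (hu : c u) (hv : ¬ c v) :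
    IsEdgeCut G T := by
  refine ⟨hT, not_conn_of_colour _ c ?_ u v hu hv⟩
  intro a b hab
  rw [deleteEdges_adj] at hab
  exact hc a b hab.1 hab.2

lemma bond_isBond : IsBond G bond := by
  refine ⟨⟨s(0,1), by decide, by decide⟩, ?_, ?_⟩
  · refine cut_of_colour bond (fun e he => he.1) (fun v => v = 0) ?_ 0 1 rfl (by decide)
    intro u v huv hn
    have : ¬ ((0 : Fin 11) ∈ s(u,v)) := fun h => hn ⟨huv, h⟩
    simp at this
    simp [Ne.symm this.1, Ne.symm this.2]
  · rintro T ⟨hTB, hBT⟩ - ⟨-, hT⟩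
    apply hT
    obtain ⟨e, heB, heT⟩ := Set.not_subset.1 hBT
    apply conn_of
    intro c hc
    have h1 : ∀ u v, G.Adj u v → s(u,v) ∉ T → (c u ↔ c v) := by
      intro u v huv hn
      exact hc u v (by rw [deleteEdges_adj]; exact ⟨huv, hn⟩)
    have h2 := forall_adj (P := fun u v => u ≠ 0 → v ≠ 0 → (c u ↔ c v)) (by
      intro u v huv hu hv
      refine h1 u v huv (fun h => ?_)
      have := (hTB h).2
      simp at this
      rcases this with h | h
      · exact hu h.symm
      · exact hv h.symm)
    have h3 : (c 0 ↔ c 1) ∨ (c 0 ↔ c 2) ∨ (c 0 ↔ c 3) ∨ (c 0 ↔ c 4) := by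
      rw [bond_eq] at heB
      simp at heB
      rcases heB with rfl | rfl | rfl | rfl
      · exact Or.inl (h1 _ _ (by decide) heT)
      · exact Or.inr (Or.inl (h1 _ _ (by decide) heT))
      · exact Or.inr (Or.inr (Or.inl (h1 _ _ (by decide) heT)))
      · exact Or.inr (Or.inr (Or.inr (h1 _ _ (by decide) heT)))
    simp at h2
    have key : ∀ u, c u ↔ c 1 := by
      intro u
      fin_cases u <;> simp <;> grind
    intro u v hu
    exact (key v).2 ((key u).1 hu)

/-- A bond strictly larger than two does not contain both edges at a vertex of degree two,
nor any two edges of a path of such vertices. -/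
lemma series (T : Set (Sym2 (Fin 11))) (hT : IsBond G T) (h5 : 5 ≤ T.ncard)
    (S : Finset (Fin 11)) (hS : 0 ∉ S) (hS' : S.Nonempty)
    (e f : Sym2 (Fin 11)) (hef : ∀ u v, G.Adj u v → u ∈ S → v ∉ S → s(u,v) = e ∨ s(u,v) = f)
    (he : e ∈ T) (hf : f ∈ T) : False := by
  have hsub : ({e, f} : Set (Sym2 (Fin 11))) ⊆ T := by
    rintro x (rfl | rfl) <;> assumption
  have hcard : ({e, f} : Set (Sym2 (Fin 11))).ncard ≤ 2 := by
    refine (Set.ncard_insert_le e {f}).trans ?_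
    simp
  refine hT.2.2 {e, f} ⟨hsub, fun h => ?_⟩ ⟨e, by simp⟩ ?_
  · have := Set.ncard_le_ncard h (Set.toFinite _)
    omega
  · obtain ⟨a, ha⟩ := hS'
    refine cut_of_colour _ (hsub.trans hT.2.1.1) (fun v => v ∈ S) ?_ a 0 ha hS
    intro u v huv hn
    by_contra hc
    apply hn
    by_cases hu : u ∈ S
    · have hv : v ∉ S := fun hv => hc (by simp [hu, hv])
      simpa using hef u v huv hu hv
    · have hv : v ∈ S := by
        by_contra hv
        exact hc (by simp [hu, hv])
      rw [Sym2.eq_swap]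
      simpa using hef v u huv.symm hv hu

lemma edge_eq : G.edgeSet = (({s(0,1),s(0,2),s(1,2),s(0,3),s(0,4),s(3,4),s(1,5),s(5,6),s(6,7),
    s(7,3),s(1,8),s(8,9),s(9,10),s(10,3)} : Finset (Sym2 (Fin 11))) : Set (Sym2 (Fin 11))) := by
  ext e
  induction e with | _ u v
  simp only [mem_edgeSet, Finset.mem_coe]
  revert u v
  decide

open Classical in
/-- Size of a set of edges as a sum of indicators. -/
lemma card_eq (T : Set (Sym2 (Fin 11))) (hT : T ⊆ G.edgeSet) : T.ncard =
    (if s(0,1) ∈ T then 1 else 0) + (if s(0,2) ∈ T then 1 else 0) +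
    (if s(1,2) ∈ T then 1 else 0) + (if s(0,3) ∈ T then 1 else 0) +
    (if s(0,4) ∈ T then 1 else 0) + (if s(3,4) ∈ T then 1 else 0) +
    (if s(1,5) ∈ T then 1 else 0) + (if s(5,6) ∈ T then 1 else 0) +
    (if s(6,7) ∈ T then 1 else 0) + (if s(7,3) ∈ T then 1 else 0) +
    (if s(1,8) ∈ T then 1 else 0) + (if s(8,9) ∈ T then 1 else 0) +
    (if s(9,10) ∈ T then 1 else 0) + (if s(10,3) ∈ T then 1 else 0) := by
  have h : T = (Finset.filter (· ∈ T) ({s(0,1),s(0,2),s(1,2),s(0,3),s(0,4),s(3,4),s(1,5),s(5,6),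
      s(6,7),s(7,3),s(1,8),s(8,9),s(9,10),s(10,3)} : Finset (Sym2 (Fin 11))) :
      Set (Sym2 (Fin 11))) := by
    ext e
    rw [Finset.mem_coe, Finset.mem_filter, ← Finset.mem_coe, ← edge_eq]
    exact ⟨fun h => ⟨hT h, h⟩, fun h => h.2⟩
  conv_lhs => rw [h, Set.ncard_coe_finset, Finset.card_filter]
  repeat rw [Finset.sum_insert (by decide)]
  rw [Finset.sum_singleton]
  ring

lemma tri (a b d x y z : Prop) [Decidable a] [Decidable b] [Decidable d] [Decidable (x ↔ y)]
    (ma : a ↔ ¬ (x ↔ y)) (mb : b ↔ ¬ (x ↔ z)) (md : d ↔ ¬ (y ↔ z)) (p : b → d → False) :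
    (if a then 1 else 0) + (if b then 1 else 0) + (if d then 1 else 0) =
      if (x ↔ y) then 0 else 2 := by
  by_cases x <;> by_cases y <;> by_cases z <;> simp_all

lemma quad (a b d e x y z w t : Prop) [Decidable a] [Decidable b] [Decidable d] [Decidable e]
    [Decidable (x ↔ t)]
    (ma : a ↔ ¬ (x ↔ y)) (mb : b ↔ ¬ (y ↔ z)) (md : d ↔ ¬ (z ↔ w)) (me : e ↔ ¬ (w ↔ t))
    (p1 : a → b → False) (p2 : a → d → False) (p3 : a → e → False)
    (p4 : b → d → False) (p5 : b → e → False) (p6 : d → e → False) :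
    (if a then 1 else 0) + (if b then 1 else 0) + (if d then 1 else 0) + (if e then 1 else 0) =
      if (x ↔ t) then 0 else 1 := by
  by_cases x <;> by_cases y <;> by_cases z <;> by_cases w <;> by_cases t <;> simp_all

lemma bond_le (T : Set (Sym2 (Fin 11))) (hT : IsBond G T) : T.ncard ≤ 4 := by
  classical
  by_contra h5
  replace h5 : 5 ≤ T.ncard := by omega
  obtain ⟨c, hc, u, v, hu, hv⟩ := colour_of_not_conn _ hT.2.1.2
  have hmem : ∀ a b, G.Adj a b → (s(a,b) ∈ T ↔ ¬ (c a ↔ c b)) := by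
    let D : Set (Sym2 (Fin 11)) := {e ∈ T | ∃ a b, e = s(a,b) ∧ c a ∧ ¬ c b}
    have hD : ∀ a b, G.Adj a b → ¬ (c a ↔ c b) → s(a,b) ∈ D := by
      intro a b hab hcc
      have hin : s(a,b) ∈ T := by
        by_contra hn
        exact hcc (hc a b (by rw [deleteEdges_adj]; exact ⟨hab, hn⟩))
      refine ⟨hin, ?_⟩
      by_cases ha : c a
      · exact ⟨a, b, rfl, ha, fun hb => hcc (by simp [ha, hb])⟩
      · refine ⟨b, a, Sym2.eq_swap, ?_, ha⟩
        by_contra hb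
        exact hcc (by simp [ha, hb])
    have hDT : D ⊆ T := fun e he => he.1
    have hDcut : IsEdgeCut G D := by
      refine cut_of_colour D (hDT.trans hT.2.1.1) c ?_ u v hu hv
      intro a b hab hn
      by_contra hcc
      exact hn (hD a b hab hcc)
    have hDne : D.Nonempty := by
      by_contra hne
      have h := forall_adj (P := fun a b => c a ↔ c b) (by
        intro a b hab
        by_contra hcc
        exact hne ⟨_, hD a b hab hcc⟩)
      have key : ∀ w, c w ↔ c 0 := by
        intro w
        fin_cases w <;> simp <;> grind
      exact hv ((key v).2 ((key u).1 hu))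
    have hTD : T ⊆ D := by
      by_contra hn
      exact hT.2.2 D ⟨hDT, hn⟩ hDne hDcut
    intro a b hab
    refine ⟨fun h hcc => ?_, fun h => hDT (hD a b hab h)⟩
    obtain ⟨-, a', b', heq, ha, hb⟩ := hTD h
    rcases Sym2.eq_iff.1 heq with ⟨rfl, rfl⟩ | ⟨rfl, rfl⟩ <;> tauto
  have hs := series T hT h5
  have p1 := hs {2} (by decide) (by decide) s(0,2) s(1,2) (by decide)
  have p2 := hs {4} (by decide) (by decide) s(0,4) s(3,4) (by decide)
  have q1 := hs {5} (by decide) (by decide) s(1,5) s(5,6) (by decide)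
  have q2 := hs {5,6} (by decide) (by decide) s(1,5) s(6,7) (by decide)
  have q3 := hs {5,6,7} (by decide) (by decide) s(1,5) s(7,3) (by decide)
  have q4 := hs {6} (by decide) (by decide) s(5,6) s(6,7) (by decide)
  have q5 := hs {6,7} (by decide) (by decide) s(5,6) s(7,3) (by decide)
  have q6 := hs {7} (by decide) (by decide) s(6,7) s(7,3) (by decide)
  have r1 := hs {8} (by decide) (by decide) s(1,8) s(8,9) (by decide)
  have r2 := hs {8,9} (by decide) (by decide) s(1,8) s(9,10) (by decide)
  have r3 := hs {8,9,10} (by decide) (by decide) s(1,8) s(10,3) (by decide)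
  have r4 := hs {9} (by decide) (by decide) s(8,9) s(9,10) (by decide)
  have r5 := hs {9,10} (by decide) (by decide) s(8,9) s(10,3) (by decide)
  have r6 := hs {10} (by decide) (by decide) s(9,10) s(10,3) (by decide)
  rw [card_eq T hT.2.1.1] at h5
  obtain ⟨m1, m2, m3, m4, m5, m6, m7, m8, m9, m10, m11, m12, m13, m14⟩ := forall_adj hmem
  clear hmem hs hc hu hv hT
  have n1 : (if s(0,1) ∈ T then 1 else 0) + (if s(0,2) ∈ T then 1 else 0) +
      (if s(1,2) ∈ T then 1 else 0) = if (c 0 ↔ c 1) then 0 else 2 := by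
    exact tri _ _ _ _ _ _ m1 m2 m3 p1
  have n2 : (if s(0,3) ∈ T then 1 else 0) + (if s(0,4) ∈ T then 1 else 0) +
      (if s(3,4) ∈ T then 1 else 0) = if (c 0 ↔ c 3) then 0 else 2 := by
    exact tri _ _ _ _ _ _ m4 m5 m6 p2
  have n3 : (if s(1,5) ∈ T then 1 else 0) + (if s(5,6) ∈ T then 1 else 0) +
      (if s(6,7) ∈ T then 1 else 0) + (if s(7,3) ∈ T then 1 else 0) =
      if (c 1 ↔ c 3) then 0 else 1 := by
    exact quad _ _ _ _ _ _ _ _ _ m7 m8 m9 m10 q1 q2 q3 q4 q5 q6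
  have n4 : (if s(1,8) ∈ T then 1 else 0) + (if s(8,9) ∈ T then 1 else 0) +
      (if s(9,10) ∈ T then 1 else 0) + (if s(10,3) ∈ T then 1 else 0) =
      if (c 1 ↔ c 3) then 0 else 1 := by
    exact quad _ _ _ _ _ _ _ _ _ m11 m12 m13 m14 r1 r2 r3 r4 r5 r6
  have n5 : (if (c 0 ↔ c 1) then 0 else 2) + (if (c 0 ↔ c 3) then 0 else 2) +
      (if (c 1 ↔ c 3) then 0 else 1) + (if (c 1 ↔ c 3) then 0 else 1) ≤ 4 := by
    by_cases c 0 <;> by_cases c 1 <;> by_cases c 3 <;> simp [*]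
  omega

/-- The cycle formed by the two long paths. -/
def C : G.Walk 1 1 :=
  .cons (v := 5) (by decide) <| .cons (v := 6) (by decide) <| .cons (v := 7) (by decide) <|
  .cons (v := 3) (by decide) <| .cons (v := 10) (by decide) <| .cons (v := 9) (by decide) <|
  .cons (v := 8) (by decide) <| .cons (v := 1) (by decide) .nil

lemma C_isCycle : C.IsCycle := by
  rw [Walk.isCycle_def, Walk.isTrail_def]
  refine ⟨by decide, by simp [C], by decide⟩

open Classical in
/-- The number of edges of a cycle at a vertex is zero or two. -/
lemma deg (u : Fin 11) (D : G.Walk u u) (hD : D.IsCycle) (v : Fin 11) (N : Finset (Fin 11))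
    (hN : ∀ w, G.Adj v w → w ∈ N) :
    (∑ w ∈ N, if s(v,w) ∈ D.edges then 1 else 0) = 0 ∨
    (∑ w ∈ N, if s(v,w) ∈ D.edges then 1 else 0) = 2 := by
  rw [← Finset.card_filter]
  by_cases hv : v ∈ D.support
  · right
    rw [← hD.ncard_neighborSet_toSubgraph_eq_two hv, ← Set.ncard_coe_finset]
    congr 1
    ext w
    have : D.toSubgraph.Adj v w ↔ s(v,w) ∈ D.edges := by
      rw [← Walk.mem_edges_toSubgraph, Subgraph.mem_edgeSet]
    simp only [Finset.coe_filter, Set.mem_ofPred_eq, Subgraph.mem_neighborSet, this]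
    exact ⟨fun h => h.2, fun h => ⟨hN w (Walk.adj_of_mem_edges D h), h⟩⟩
  · left
    rw [Finset.card_eq_zero, Finset.filter_eq_empty_iff]
    intro w _ hw
    exact hv (D.fst_mem_support_of_mem_edges hw)

lemma cycle_le (u : Fin 11) (D : G.Walk u u) (hD : D.IsCycle) : D.length ≤ 8 := by
  classical
  have hlen : D.length = {e | e ∈ D.edges}.ncard := by
    rw [← Walk.length_edges, ← List.toFinset_card_of_nodup hD.edges_nodup, ← Set.ncard_coe_finset]
    congr 1
    ext e
    simp
  have hsum : {e | e ∈ D.edges}.ncard =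
      (if s(0,1) ∈ D.edges then 1 else 0) + (if s(0,2) ∈ D.edges then 1 else 0) +
      (if s(1,2) ∈ D.edges then 1 else 0) + (if s(0,3) ∈ D.edges then 1 else 0) +
      (if s(0,4) ∈ D.edges then 1 else 0) + (if s(3,4) ∈ D.edges then 1 else 0) +
      (if s(1,5) ∈ D.edges then 1 else 0) + (if s(5,6) ∈ D.edges then 1 else 0) +
      (if s(6,7) ∈ D.edges then 1 else 0) + (if s(7,3) ∈ D.edges then 1 else 0) +
      (if s(1,8) ∈ D.edges then 1 else 0) + (if s(8,9) ∈ D.edges then 1 else 0) +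
      (if s(9,10) ∈ D.edges then 1 else 0) + (if s(10,3) ∈ D.edges then 1 else 0) := by
    refine (card_eq {e | e ∈ D.edges} (fun e he => D.edges_subset_edgeSet he)).trans ?_
    congr!
  rw [hlen, hsum]
  have d0 := deg u D hD 0 {1,2,3,4} (by decide)
  have d1 := deg u D hD 1 {0,2,5,8} (by decide)
  have d2 := deg u D hD 2 {0,1} (by decide)
  have d3 := deg u D hD 3 {0,4,7,10} (by decide)
  have d4 := deg u D hD 4 {0,3} (by decide)
  have d5 := deg u D hD 5 {1,6} (by decide)
  have d6 := deg u D hD 6 {5,7} (by decide)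
  have d7 := deg u D hD 7 {6,3} (by decide)
  have d8 := deg u D hD 8 {1,9} (by decide)
  have d9 := deg u D hD 9 {8,10} (by decide)
  have d10 := deg u D hD 10 {9,3} (by decide)
  simp only [Finset.sum_insert, Finset.sum_singleton, Finset.mem_insert, Finset.mem_singleton,
    Fin.reduceEq, or_self, not_false_eq_true,
    (Sym2.eq_swap : s((1 : Fin 11), 0) = s(0, 1)),
    (Sym2.eq_swap : s((2 : Fin 11), 0) = s(0, 2)),
    (Sym2.eq_swap : s((2 : Fin 11), 1) = s(1, 2)),
    (Sym2.eq_swap : s((3 : Fin 11), 0) = s(0, 3)),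
    (Sym2.eq_swap : s((4 : Fin 11), 0) = s(0, 4)),
    (Sym2.eq_swap : s((4 : Fin 11), 3) = s(3, 4)),
    (Sym2.eq_swap : s((5 : Fin 11), 1) = s(1, 5)),
    (Sym2.eq_swap : s((6 : Fin 11), 5) = s(5, 6)),
    (Sym2.eq_swap : s((7 : Fin 11), 6) = s(6, 7)),
    (Sym2.eq_swap : s((3 : Fin 11), 7) = s(7, 3)),
    (Sym2.eq_swap : s((8 : Fin 11), 1) = s(1, 8)),
    (Sym2.eq_swap : s((9 : Fin 11), 8) = s(8, 9)),
    (Sym2.eq_swap : s((10 : Fin 11), 9) = s(9, 10)),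
    (Sym2.eq_swap : s((3 : Fin 11), 10) = s(10, 3))] at d0 d1 d2 d3 d4 d5 d6 d7 d8 d9 d10
  have hb : ∀ e, (if e ∈ D.edges then 1 else 0) ≤ 1 := by intro e; split_ifs <;> simp
  have b0 := hb s(0,1)
  have b1 := hb s(0,2)
  have b2 := hb s(1,2)
  have b3 := hb s(0,3)
  have b4 := hb s(0,4)
  have b5 := hb s(3,4)
  have b6 := hb s(1,5)
  have b7 := hb s(5,6)
  have b8 := hb s(6,7)
  have b9 := hb s(7,3)
  have b10 := hb s(1,8)
  have b11 := hb s(8,9)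
  have b12 := hb s(9,10)
  have b13 := hb s(10,3)
  clear hb hlen hsum
  generalize (if s((0 : Fin 11), 1) ∈ D.edges then 1 else 0) = t0 at *
  generalize (if s((0 : Fin 11), 2) ∈ D.edges then 1 else 0) = t1 at *
  generalize (if s((1 : Fin 11), 2) ∈ D.edges then 1 else 0) = t2 at *
  generalize (if s((0 : Fin 11), 3) ∈ D.edges then 1 else 0) = t3 at *
  generalize (if s((0 : Fin 11), 4) ∈ D.edges then 1 else 0) = t4 at *
  generalize (if s((3 : Fin 11), 4) ∈ D.edges then 1 else 0) = t5 at *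
  generalize (if s((1 : Fin 11), 5) ∈ D.edges then 1 else 0) = t6 at *
  generalize (if s((5 : Fin 11), 6) ∈ D.edges then 1 else 0) = t7 at *
  generalize (if s((6 : Fin 11), 7) ∈ D.edges then 1 else 0) = t8 at *
  generalize (if s((7 : Fin 11), 3) ∈ D.edges then 1 else 0) = t9 at *
  generalize (if s((1 : Fin 11), 8) ∈ D.edges then 1 else 0) = t10 at *
  generalize (if s((8 : Fin 11), 9) ∈ D.edges then 1 else 0) = t11 at *
  generalize (if s((9 : Fin 11), 10) ∈ D.edges then 1 else 0) = t12 at *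
  generalize (if s((10 : Fin 11), 3) ∈ D.edges then 1 else 0) = t13 at *
  omega

end CE

/-- there is a simple 2-connected graph with a longest cycle and a largest bond
sharing no edge. -/
theorem exists_two_connected_longest_cycle_avoids_largest_bond :
    ∃ (V : Type) (_ : Fintype V) (G : SimpleGraph V) (v : V) (C : G.Walk v v)
      (B : Set (Sym2 V)), TwoConnected G ∧ IsLongestCycle G C ∧ IsLargestBond G B ∧
        ∀ e ∈ C.edges, e ∉ B := by
  refine ⟨Fin 11, inferInstance, CE.G, 1, CE.C, CE.bond, CE.twoConn,
    ⟨CE.C_isCycle, fun u D hD => CE.cycle_le u D hD⟩,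
    ⟨CE.bond_isBond, fun T hT => ?_⟩, ?_⟩
  · rw [CE.bond_card]
    exact CE.bond_le T hT
  · rw [CE.bond_eq]
    simp only [Finset.mem_coe]
    decide
end

section
/- For every n ≥ 3 and 1 ≤ k < n/2, every bond of the generalized Petersen graph P(n, k) has size at most n + 2, and the set of bond sizes of P(n,k) is exactly {3, 4, ..., n + 2}. -/
open SimpleGraph

/-- The generalized Petersen graph `P(n, k)`: outer vertices `Sum.inl i` ("xᵢ") and
inner vertices `Sum.inr i` ("yᵢ"), with edges `xᵢxᵢ₊₁`, `xᵢyᵢ`, `yᵢyᵢ₊ₖ` (indices mod n). -/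
def GPetersen (n k : ℕ) : SimpleGraph (ZMod n ⊕ ZMod n) :=
  SimpleGraph.fromRel (fun a b =>
    (∃ i : ZMod n, a = Sum.inl i ∧ b = Sum.inl (i + 1)) ∨
    (∃ i : ZMod n, a = Sum.inl i ∧ b = Sum.inr i) ∨
    (∃ i : ZMod n, a = Sum.inr i ∧ b = Sum.inr (i + (k : ZMod n))))

/-! ### Adjacency and edges -/

lemma gp_k_ne (n k : ℕ) (hk1 : 1 ≤ k) (hk2 : 2 * k < n) : (k : ZMod n) ≠ 0 := by
  intro h
  rw [ZMod.natCast_eq_zero_iff] at h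
  have := Nat.le_of_dvd (by omega) h
  omega

lemma gp_twice_ne (n k : ℕ) (hk1 : 1 ≤ k) (hk2 : 2 * k < n) : (k : ZMod n) + k ≠ 0 := by
  intro h
  have h' : ((2 * k : ℕ) : ZMod n) = 0 := by push_cast; rw [two_mul]; exact h
  rw [ZMod.natCast_eq_zero_iff] at h'
  have := Nat.le_of_dvd (by omega) h'
  omega

lemma gp_one_ne (n : ℕ) (hn : 3 ≤ n) : (1 : ZMod n) ≠ 0 := by
  have := gp_k_ne n 1 le_rfl (by omega)
  simpa using this

lemma gp_two_ne (n : ℕ) (hn : 3 ≤ n) : (1 : ZMod n) + 1 ≠ 0 := by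
  have := gp_twice_ne n 1 le_rfl (by omega)
  simpa using this

/-- labelled edges -/
def gpEdge (n k : ℕ) : ZMod n ⊕ (ZMod n ⊕ ZMod n) → Sym2 (ZMod n ⊕ ZMod n)
  | .inl i => s(.inl i, .inl (i + 1))
  | .inr (.inl i) => s(.inl i, .inr i)
  | .inr (.inr i) => s(.inr i, .inr (i + (k : ZMod n)))

lemma gpEdge_inj (n k : ℕ) (hn : 3 ≤ n) (hk1 : 1 ≤ k) (hk2 : 2 * k < n) :
    Function.Injective (gpEdge n k) := by
  have h2 := gp_two_ne n hn
  have h2k := gp_twice_ne n k hk1 hk2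
  rintro (i | i | i) (j | j | j) h <;> simp [gpEdge] at h ⊢
  · rcases h with h | ⟨h, h'⟩
    · exact h
    · exfalso; apply h2; rw [h, add_assoc] at h'; simpa using h'
  · exact h
  · rcases h with h | ⟨h, h'⟩
    · exact h
    · exfalso; apply h2k; rw [h, add_assoc] at h'; simpa using h'

lemma gp_adj_outer (n k : ℕ) (hn : 3 ≤ n) (i : ZMod n) :
    (GPetersen n k).Adj (.inl i) (.inl (i + 1)) := by
  have h := gp_one_ne n hn
  unfold GPetersen
  rw [fromRel_adj]
  exact ⟨by simpa using h, Or.inl (Or.inl ⟨i, rfl, rfl⟩)⟩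

lemma gp_adj_spoke (n k : ℕ) (i : ZMod n) :
    (GPetersen n k).Adj (.inl i) (.inr i) := by
  unfold GPetersen
  rw [fromRel_adj]
  exact ⟨by simp, Or.inl (Or.inr (Or.inl ⟨i, rfl, rfl⟩))⟩

lemma gp_adj_inner (n k : ℕ) (hk1 : 1 ≤ k) (hk2 : 2 * k < n) (i : ZMod n) :
    (GPetersen n k).Adj (.inr i) (.inr (i + (k : ZMod n))) := by
  have h := gp_k_ne n k hk1 hk2
  unfold GPetersen
  rw [fromRel_adj]
  exact ⟨by simpa using h, Or.inl (Or.inr (Or.inr ⟨i, rfl, rfl⟩))⟩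

lemma gp_edgeSet (n k : ℕ) (hn : 3 ≤ n) (hk1 : 1 ≤ k) (hk2 : 2 * k < n) :
    (GPetersen n k).edgeSet = Set.range (gpEdge n k) := by
  apply Set.Subset.antisymm
  · intro e
    induction e using Sym2.ind with
    | _ a b =>
      rw [mem_edgeSet]
      unfold GPetersen
      rw [fromRel_adj]
      rintro ⟨-, (⟨i, rfl, rfl⟩ | ⟨i, rfl, rfl⟩ | ⟨i, rfl, rfl⟩) |
        (⟨i, rfl, rfl⟩ | ⟨i, rfl, rfl⟩ | ⟨i, rfl, rfl⟩)⟩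
      · exact ⟨.inl i, rfl⟩
      · exact ⟨.inr (.inl i), rfl⟩
      · exact ⟨.inr (.inr i), rfl⟩
      · exact ⟨.inl i, Sym2.eq_swap⟩
      · exact ⟨.inr (.inl i), Sym2.eq_swap⟩
      · exact ⟨.inr (.inr i), Sym2.eq_swap⟩
  · rintro _ ⟨i | i | i, rfl⟩
    · exact gp_adj_outer n k hn i
    · exact gp_adj_spoke n k i
    · exact gp_adj_inner n k hk1 hk2 i

lemma gp_nbr_inl (n k : ℕ) (i : ZMod n) (w : ZMod n ⊕ ZMod n)
    (h : (GPetersen n k).Adj (.inl i) w) :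
    w = .inl (i - 1) ∨ w = .inl (i + 1) ∨ w = .inr i := by
  unfold GPetersen at h
  rw [fromRel_adj] at h
  rcases h with ⟨-, (⟨j, h1, rfl⟩ | ⟨j, h1, rfl⟩ | ⟨j, h1, rfl⟩) |
        (⟨j, rfl, h1⟩ | ⟨j, rfl, h1⟩ | ⟨j, rfl, h1⟩)⟩ <;> simp at h1 <;> subst h1 <;> simp

lemma gp_nbr_inr (n k : ℕ) (i : ZMod n) (w : ZMod n ⊕ ZMod n)
    (h : (GPetersen n k).Adj (.inr i) w) :
    w = .inl i ∨ w = .inr (i + k) ∨ w = .inr (i - k) := by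
  unfold GPetersen at h
  rw [fromRel_adj] at h
  rcases h with ⟨-, (⟨j, h1, rfl⟩ | ⟨j, h1, rfl⟩ | ⟨j, h1, rfl⟩) |
        (⟨j, rfl, h1⟩ | ⟨j, rfl, h1⟩ | ⟨j, rfl, h1⟩)⟩ <;> simp at h1 <;> subst h1 <;> simp

/-! ### Upper bound -/

lemma gp_upper (n k : ℕ) (hn : 3 ≤ n) (hk1 : 1 ≤ k) (hk2 : 2 * k < n)
    (B : Set (Sym2 (ZMod n ⊕ ZMod n))) (hB : IsBond (GPetersen n k) B) : B.ncard ≤ n + 2 := by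
  have : NeZero n := ⟨by omega⟩
  obtain ⟨⟨e, he⟩, hcut, hmin⟩ := hB
  by_cases hT : (B \ {e}).Nonempty
  · have h1 := hmin (B \ {e}) (Set.sdiff_singleton_ssubset.2 he) hT
    have hsub : B \ {e} ⊆ (GPetersen n k).edgeSet := Set.sdiff_subset.trans hcut.1
    have hconn : ((GPetersen n k).deleteEdges (B \ {e})).Connected := by
      by_contra hc
      exact h1 ⟨hsub, hc⟩
    have h2 := hconn.card_vert_le_card_edgeSet_add_one
    rw [edgeSet_deleteEdges, Nat.card_coe_set_eq, Set.ncard_sdiff hsub (Set.toFinite _)] at h2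
    have h3 : (GPetersen n k).edgeSet.ncard = 3 * n := by
      rw [gp_edgeSet n k hn hk1 hk2, ← Set.image_univ,
        Set.ncard_image_of_injective _ (gpEdge_inj n k hn hk1 hk2), Set.ncard_univ]
      simp [Nat.card_eq_fintype_card, ZMod.card]
      ring
    have h4 : Nat.card (ZMod n ⊕ ZMod n) = 2 * n := by
      simp [Nat.card_eq_fintype_card, ZMod.card]
      ring
    have h5 := Set.ncard_sdiff_singleton_of_mem he
    have h6 : (B \ {e}).ncard ≤ (GPetersen n k).edgeSet.ncard :=
      Set.ncard_le_ncard hsub (Set.toFinite _)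
    omega
  · have h5 := Set.ncard_sdiff_singleton_of_mem he
    rw [Set.not_nonempty_iff_eq_empty] at hT
    rw [hT] at h5
    simp at h5
    omega

/-! ### Lower bound -/

lemma gp_change {n : ℕ} (h : ZMod n → Prop) (c : ZMod n) (m : ℕ) (i : ZMod n) (h1 : h i)
    (h2 : ¬ h (i + m * c)) : ∃ p, h p ∧ ¬ h (p + c) := by
  by_contra! hc
  apply h2
  clear h2
  induction m with
  | zero => simpa using h1
  | succ m ih =>
    have := hc _ ih
    convert this using 1
    push_cast; ring

lemma gp_change2 {n : ℕ} [NeZero n] (h : ZMod n → Prop) (c : ZMod n) (m : ℕ) (i : ZMod n)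
    (h1 : ¬ (h i ↔ h (i + m * c))) :
    ∃ p q, p ≠ q ∧ ¬ (h p ↔ h (p + c)) ∧ ¬ (h q ↔ h (q + c)) := by
  have key : ∀ i : ZMod n, ∀ m : ℕ, h i → ¬ h (i + m * c) → 
      ∃ p q, p ≠ q ∧ ¬ (h p ↔ h (p + c)) ∧ ¬ (h q ↔ h (q + c)) := by
    intro i m h1 h2
    obtain ⟨p, hp, hp'⟩ := gp_change h c m i h1 h2
    obtain ⟨q, hq, hq'⟩ := gp_change (fun z => ¬ h z) c ((n - 1) * m) (i + m * c) h2 (by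
      rw [not_not]
      convert h1 using 1
      rw [Nat.cast_mul, Nat.cast_sub (NeZero.one_le)]
      simp)
    refine ⟨p, q, ?_, by tauto, by tauto⟩
    rintro rfl
    exact hq hp
  by_cases hi : h i
  · exact key i m hi (by tauto)
  · refine key (i + m * c) ((n - 1) * m) (by tauto) ?_
    convert hi using 2
    rw [Nat.cast_mul, Nat.cast_sub (NeZero.one_le)]
    simp

lemma gp_lower (n k : ℕ) (hn : 3 ≤ n) (hk1 : 1 ≤ k) (hk2 : 2 * k < n)
    (B : Set (Sym2 (ZMod n ⊕ ZMod n))) (hB : IsEdgeCut (GPetersen n k) B) : 3 ≤ B.ncard := by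
  have : NeZero n := ⟨by omega⟩
  have hk0 := gp_k_ne n k hk1 hk2
  have h2k := gp_twice_ne n k hk1 hk2
  obtain ⟨hsub, hdis⟩ := hB
  have three : ∀ a b c, a ≠ b → a ≠ c → b ≠ c → gpEdge n k a ∈ B → gpEdge n k b ∈ B →
      gpEdge n k c ∈ B → 3 ≤ B.ncard := by
    intro a b c hab hac hbc ha hb hc
    have hinj := gpEdge_inj n k hn hk1 hk2
    exact (Set.two_lt_ncard_iff (Set.toFinite _)).2 ⟨_, _, _, ha, hb, hc, hinj.ne hab, hinj.ne hac, hinj.ne hbc⟩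
  have hex : ∃ u v, ¬ ((GPetersen n k).deleteEdges B).Reachable u v := by
    by_contra! hc
    exact hdis ⟨hc⟩
  obtain ⟨u, v, huv⟩ := hex
  set H := (GPetersen n k).deleteEdges B with hH
  let X : ZMod n ⊕ ZMod n → Prop := fun w => H.Reachable u w
  have hXu : X u := Reachable.refl _
  have hXv : ¬ X v := huv
  have hcross : ∀ a b, (GPetersen n k).Adj a b → ¬ (X a ↔ X b) → s(a, b) ∈ B := by
    intro a b hab hx
    by_contra hb
    have hadj : H.Adj a b := by
      rw [hH, deleteEdges_adj]; exact ⟨hab, hb⟩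
    exact hx ⟨fun h => h.trans hadj.reachable, fun h => h.trans hadj.symm.reachable⟩
  clear_value X
  have ho : ∀ i, ¬ (X (.inl i) ↔ X (.inl (i + 1))) → gpEdge n k (.inl i) ∈ B :=
    fun i h => hcross _ _ (gp_adj_outer n k hn i) h
  have hs : ∀ i, ¬ (X (.inl i) ↔ X (.inr i)) → gpEdge n k (.inr (.inl i)) ∈ B :=
    fun i h => hcross _ _ (gp_adj_spoke n k i) h
  have hi : ∀ i, ¬ (X (.inr i) ↔ X (.inr (i + k))) → gpEdge n k (.inr (.inr i)) ∈ B :=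
    fun i h => hcross _ _ (gp_adj_inner n k hk1 hk2 i) h
  have hd1 : ∀ i : ZMod n, i ≠ i + k := by intro i; simpa using hk0
  have hd2 : ∀ i : ZMod n, i ≠ i + k + k := by intro i; rw [add_assoc]; simpa using h2k
  by_cases hout : ∀ i j : ZMod n, X (.inl i) ↔ X (.inl j)
  · skip
    have hy : ∃ i, ¬ (X (.inl i) ↔ X (.inr i)) := by
      by_contra! hc
      have : ∀ w, X w ↔ X (.inl 0) := by
        rintro (i | i)
        · exact hout _ _
        · rw [← hc i]; exact hout _ _
      exact hXv ((this v).2 ((this u).1 hXu))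
    obtain ⟨i, hi0⟩ := hy
    by_cases hm : ∀ m : ℕ, X (.inr i) ↔ X (.inr (i + m * k))
    · have e1 := hm 1
      have e2 := hm 2
      rw [show i + ((1 : ℕ) : ZMod n) * k = i + k by push_cast; ring] at e1
      rw [show i + ((2 : ℕ) : ZMod n) * k = i + k + k by push_cast; ring] at e2
      have f1 := hout i (i + k)
      have f2 := hout i (i + k + k)
      refine three (.inr (.inl i)) (.inr (.inl (i + k))) (.inr (.inl (i + k + k))) ?_ ?_ ?_
        (hs _ hi0) (hs _ (by tauto)) (hs _ (by tauto))
      · simpa using hk0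
      · simpa using hd2 i
      · simpa using hk0
    · push Not at hm
      obtain ⟨m, hm⟩ := hm
      obtain ⟨p, q, hpq, hp, hq⟩ := gp_change2 (fun z => X (.inr z)) k m i (by tauto)
      exact three (.inr (.inr p)) (.inr (.inr q)) (.inr (.inl i)) (by simpa using hpq) (by simp)
        (by simp) (hi _ hp) (hi _ hq) (hs _ hi0)
  · push Not at hout
    obtain ⟨i, j, hij⟩ := hout
    obtain ⟨p, q, hpq, hp, hq⟩ := gp_change2 (fun z => X (.inl z)) 1 (j - i).val i (by
      simp; tauto)
    by_cases hin : ∃ r, ¬ (X (.inr r) ↔ X (.inr (r + k)))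
    · obtain ⟨r, hr⟩ := hin
      exact three (.inl p) (.inl q) (.inr (.inr r)) (by simpa using hpq) (by simp)
        (by simp) (ho _ hp) (ho _ hq) (hi _ hr)
    · by_cases hsp : ∃ r, ¬ (X (.inl r) ↔ X (.inr r))
      · obtain ⟨r, hr⟩ := hsp
        exact three (.inl p) (.inl q) (.inr (.inl r)) (by simpa using hpq) (by simp)
          (by simp) (ho _ hp) (ho _ hq) (hs _ hr)
      · push Not at hin hsp
        have hper : ∀ r, X (.inl r) ↔ X (.inl (r + k)) := by
          intro r; rw [hsp, hsp]; exact hin r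
        have a1 := hper p
        have a2 := hper (p + 1)
        have a3 := hper (p + k)
        have a4 := hper (p + 1 + k)
        rw [show p + 1 + k + k = p + k + k + 1 by ring] at a4
        rw [show p + 1 + k = p + k + 1 by ring] at a2 a4
        refine three (.inl p) (.inl (p + k)) (.inl (p + k + k)) ?_ ?_ ?_
          (ho _ hp) (ho _ fun h => hp (a1.trans (h.trans a2.symm)))
          (ho _ fun h => hp ((a1.trans a3).trans (h.trans (a2.trans a4).symm)))
        · simpa using hk0
        · simpa using hd2 p
        · simpa using hk0

/-! ### General facts on crossing edges and bonds -/

lemma mem_cross {V : Type*} (G : SimpleGraph V) (X : Set V) (a b : V) :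
    s(a, b) ∈ crossEdges G X ↔ G.Adj a b ∧ ¬ (a ∈ X ↔ b ∈ X) := by
  unfold crossEdges
  simp only [Set.mem_ofPred_eq, mem_edgeSet, Set.mem_compl_iff]
  constructor
  · rintro ⟨h, x, hx, y, hy, he⟩
    refine ⟨h, ?_⟩
    rw [Sym2.eq_iff] at he
    rcases he with ⟨rfl, rfl⟩ | ⟨rfl, rfl⟩ <;> tauto
  · rintro ⟨h, hx⟩
    refine ⟨h, ?_⟩
    by_cases ha : a ∈ X
    · exact ⟨a, ha, b, by tauto, rfl⟩
    · exact ⟨b, by tauto, a, ha, Sym2.eq_swap⟩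

lemma bond_of_cross {V : Type*} (G : SimpleGraph V) (X : Set V) (r0 r1 : V)
    (h0 : r0 ∈ X) (h1 : r1 ∉ X)
    (H0 : ∀ u ∈ X, (G.deleteEdges (crossEdges G X)).Reachable u r0)
    (H1 : ∀ u ∉ X, (G.deleteEdges (crossEdges G X)).Reachable u r1)
    (hne : (crossEdges G X).Nonempty) : IsBond G (crossEdges G X) := by
  refine ⟨hne, ⟨fun e he => he.1, ?_⟩, ?_⟩
  · intro hc
    obtain ⟨w⟩ := hc.preconnected r0 r1
    have : ∀ a b, (G.deleteEdges (crossEdges G X)).Walk a b → a ∈ X → b ∈ X := by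
      intro a b w
      induction w with
      | nil => exact id
      | cons h p ih =>
        intro ha
        apply ih
        rw [deleteEdges_adj, mem_cross] at h
        tauto
    exact h1 (this _ _ w h0)
  · rintro T hT - ⟨-, hdis⟩
    apply hdis
    obtain ⟨e, he, heT⟩ := Set.exists_of_ssubset hT
    have hle : G.deleteEdges (crossEdges G X) ≤ G.deleteEdges T := by
      intro a b h
      rw [deleteEdges_adj] at h ⊢
      exact ⟨h.1, fun h3 => h.2 (hT.subset h3)⟩
    obtain ⟨hE, x, hx, y, hy, rfl⟩ := he
    have hxy : (G.deleteEdges T).Adj x y := by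
      rw [deleteEdges_adj]; exact ⟨hE, heT⟩
    have h01 : (G.deleteEdges T).Reachable r1 r0 :=
      ((H1 y hy).mono hle).symm.trans (hxy.symm.reachable.trans ((H0 x hx).mono hle))
    have all : ∀ u, (G.deleteEdges T).Reachable u r0 := by
      intro u
      by_cases hu : u ∈ X
      · exact (H0 u hu).mono hle
      · exact ((H1 u hu).mono hle).trans h01
    have : Nonempty V := ⟨r0⟩
    exact ⟨fun u v => (all u).trans (all v).symm⟩

lemma cross_singleton {V : Type*} [Finite V] (G : SimpleGraph V) (v a b c : V)
    (ha : G.Adj v a) (hb : G.Adj v b) (hc : G.Adj v c) (hab : a ≠ b) (hac : a ≠ c) (hbc : b ≠ c)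
    (hN : ∀ w, G.Adj v w → w = a ∨ w = b ∨ w = c) :
    (crossEdges G {v}).ncard = 3 := by
  have : crossEdges G {v} = {s(v, a), s(v, b), s(v, c)} := by
    ext e
    induction e using Sym2.ind with
    | _ x y =>
      rw [mem_cross]
      simp only [Set.mem_singleton_iff, Set.mem_insert_iff, Sym2.eq_iff]
      have := ha.ne; have := hb.ne; have := hc.ne
      constructor
      · rintro ⟨h, hx⟩
        by_cases hxv : x = v
        · subst hxv
          rcases hN _ h with rfl | rfl | rfl <;> tauto
        · have hyv : y = v := by tauto
          subst hyv
          rcases hN _ h.symm with rfl | rfl | rfl <;> tauto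
      · have := ha.symm; have := hb.symm; have := hc.symm
        rintro ((⟨rfl, rfl⟩ | ⟨rfl, rfl⟩) | (⟨rfl, rfl⟩ | ⟨rfl, rfl⟩) | (⟨rfl, rfl⟩ | ⟨rfl, rfl⟩)) <;>
          refine ⟨by assumption, ?_⟩ <;> simp only [iff_true, true_iff] <;> tauto
  rw [this, Set.ncard_eq_three]
  have := ha.ne; have := hb.ne; have := hc.ne
  exact ⟨_, _, _, by simp; tauto, by simp; tauto, by simp; tauto, rfl⟩

lemma cross_insert {V : Type*} [Finite V] (G : SimpleGraph V) (X : Set V) (v a b c : V)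
    (hv : v ∉ X) (haX : a ∈ X) (hbX : b ∉ X) (hcX : c ∉ X)
    (ha : G.Adj v a) (hb : G.Adj v b) (hc : G.Adj v c) (hbc : b ≠ c)
    (hN : ∀ w, G.Adj v w → w = a ∨ w = b ∨ w = c) :
    (crossEdges G (insert v X)).ncard = (crossEdges G X).ncard + 1 := by
  have hab : a ≠ b := by rintro rfl; exact hbX haX
  have hac : a ≠ c := by rintro rfl; exact hcX haX
  have h1 := ha.ne; have h2 := hb.ne; have h3 := hc.ne
  have hav : s(v, a) ∈ crossEdges G X := by rw [mem_cross]; tauto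
  have hbv : s(v, b) ∉ crossEdges G X := by rw [mem_cross]; tauto
  have hcv : s(v, c) ∉ crossEdges G X := by rw [mem_cross]; tauto
  have : crossEdges G (insert v X) = insert s(v, b) (insert s(v, c) (crossEdges G X \ {s(v, a)})) := by
    ext e
    induction e using Sym2.ind with
    | _ x y =>
      simp only [Set.mem_insert_iff, Set.mem_sdiff, Set.mem_singleton_iff]
      rw [mem_cross, mem_cross]
      simp only [Set.mem_insert_iff, Sym2.eq_iff]
      have key : ∀ y, G.Adj v y → ((¬ (v ∈ insert v X ↔ y ∈ insert v X)) ↔ (y = b ∨ y = c)) := by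
        intro y hy
        have := hy.ne'
        simp only [Set.mem_insert_iff, true_or, true_iff]
        rcases hN y hy with rfl | rfl | rfl <;> tauto
      by_cases hxv : x = v
      · subst hxv
        constructor
        · rintro ⟨h, h'⟩
          have := (key y h).1 h'
          tauto
        · rintro (h | h | ⟨⟨h, h'⟩, h''⟩)
          · have : y = b := by tauto
            subst this; exact ⟨hb, (key y hb).2 (by tauto)⟩
          · have : y = c := by tauto
            subst this; exact ⟨hc, (key y hc).2 (by tauto)⟩
          · exfalso
            rcases hN y h with rfl | rfl | rfl <;> tauto
      · by_cases hyv : y = v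
        · subst hyv
          constructor
          · rintro ⟨h, h'⟩
            have := (key x h.symm).1 (by simp only [Set.mem_insert_iff]; tauto)
            tauto
          · rintro (h | h | ⟨⟨h, h'⟩, h''⟩)
            · have : x = b := by tauto
              subst this; exact ⟨hb.symm, by tauto⟩
            · have : x = c := by tauto
              subst this; exact ⟨hc.symm, by tauto⟩
            · exfalso
              rcases hN x h.symm with rfl | rfl | rfl <;> tauto
        · tauto
  rw [this, Set.ncard_insert_of_notMem, Set.ncard_insert_of_notMem, Set.ncard_sdiff_singleton_of_mem hav]
  · have : 0 < (crossEdges G X).ncard := (Set.ncard_pos (Set.toFinite _)).2 ⟨_, hav⟩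
    omega
  · rintro ⟨h, -⟩; exact hcv h
  · rintro (h | ⟨h, -⟩)
    · rw [Sym2.eq_iff] at h; tauto
    · exact hbv h

/-! ### The explicit bonds -/

lemma gp_orbit (n k : ℕ) (hn : 3 ≤ n) :
    ∃ L j0 : ℕ, j0 < L ∧ (L : ZMod n) * k = 0 ∧
      (∀ j < L, (j : ZMod n) * k = (Nat.gcd n k : ℕ) → j = j0) ∧
      ∀ q : ℕ, ∃ j < L, (j : ZMod n) * k = q * (Nat.gcd n k : ℕ) := by
  classical
  have : NeZero n := ⟨by omega⟩
  have hmem : ∀ q : ℕ, ∃ j < addOrderOf (k : ZMod n), (j : ZMod n) * k = q * (Nat.gcd n k : ℕ) := by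
    intro q
    have h1 : (q * (Nat.gcd n k : ℕ) : ZMod n) ∈ AddSubgroup.zmultiples (k : ZMod n) := by
      rw [AddSubgroup.mem_zmultiples_iff]
      refine ⟨q * Nat.gcdB n k, ?_⟩
      have h2 := congrArg (Int.cast : ℤ → ZMod n) (Nat.gcd_eq_gcd_ab n k)
      push_cast at h2
      rw [h2]
      simp [zsmul_eq_mul]
      ring
    rw [mem_zmultiples_iff_mem_range_addOrderOf] at h1
    simp only [Finset.mem_image, Finset.mem_range, nsmul_eq_mul] at h1
    exact h1
  obtain ⟨j0, hj0, hj0'⟩ := hmem 1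
  refine ⟨addOrderOf (k : ZMod n), j0, hj0, ?_, ?_, hmem⟩
  · rw [← nsmul_eq_mul]; exact addOrderOf_nsmul_eq_zero _
  · intro j hj h
    apply nsmul_injOn_Iio_addOrderOf (x := (k : ZMod n)) hj hj0
    simp only [nsmul_eq_mul]
    rw [h, hj0']; simp

lemma gp_val_mod (n d c : ℕ) [NeZero n] (hd : d ∣ n) (z w : ZMod n) (hw : ∃ t : ZMod n, w = t * d)
    (h : z = c + w) (hc : c < d) (h1 : d ≤ z.val) (h2 : z.val < 2 * d) : z.val = c + d := by
  obtain ⟨t, rfl⟩ := hw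
  have h3 := congrArg (ZMod.castHom hd (ZMod d)) h
  rw [← ZMod.natCast_zmod_val z] at h3
  simp only [map_add, map_mul, map_natCast, CharP.cast_eq_zero, mul_zero, add_zero] at h3
  rw [ZMod.natCast_eq_natCast_iff'] at h3
  rw [Nat.mod_eq_of_lt hc] at h3
  have := Nat.mod_add_div z.val d
  have h4 : z.val / d = 1 := by
    rw [Nat.div_eq_iff (by omega)]; omega
  rw [h4, h3] at this
  omega

/-- the growing induced tree -/
def gpA (n d m : ℕ) : Set (ZMod n ⊕ ZMod n) :=
  fun v => match v with
  | .inl i => d ≤ i.val ∧ i.val < d + m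
  | .inr i => d ≤ i.val ∧ i.val + n < 2 * d + m

lemma gpA_inl (n d m : ℕ) (i : ZMod n) : (.inl i : ZMod n ⊕ ZMod n) ∈ gpA n d m ↔
    d ≤ i.val ∧ i.val < d + m := Iff.rfl

lemma gpA_inr (n d m : ℕ) (i : ZMod n) : (.inr i : ZMod n ⊕ ZMod n) ∈ gpA n d m ↔
    d ≤ i.val ∧ i.val + n < 2 * d + m := Iff.rfl

lemma gp_val_cast (n j : ℕ) (h : j < n) : ((j : ℕ) : ZMod n).val = j :=
  ZMod.val_cast_of_lt h

lemma gp_eq_cast (n j : ℕ) [NeZero n] (z : ZMod n) (h : z.val = j) : z = (j : ℕ) := by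
  rw [← h, ZMod.natCast_zmod_val]

lemma gp_card (n k : ℕ) (hn : 3 ≤ n) (hk1 : 1 ≤ k) (hk2 : 2 * k < n) (m : ℕ) (hm : m < n) :
    (crossEdges (GPetersen n k) (gpA n (Nat.gcd n k) (m + 1))).ncard = m + 3 := by
  have : NeZero n := ⟨by omega⟩
  have hdn : Nat.gcd n k ∣ n := Nat.gcd_dvd_left _ _
  have hdk : Nat.gcd n k ∣ k := Nat.gcd_dvd_right _ _
  have hd0 : 0 < Nat.gcd n k := Nat.gcd_pos_of_pos_left _ (by omega)
  have hdk' : Nat.gcd n k ≤ k := Nat.le_of_dvd (by omega) hdk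
  have hk0 := gp_k_ne n k hk1 hk2
  have h2k := gp_twice_ne n k hk1 hk2
  have h20 := gp_two_ne n hn
  generalize Nat.gcd n k = d at *
  have hout : ∀ i : ZMod n, (GPetersen n k).Adj (.inl i) (.inl (i - 1)) := by
    intro i
    have := (gp_adj_outer n k hn (i - 1)).symm
    rwa [sub_add_cancel] at this
  have hinn : ∀ i : ZMod n, (GPetersen n k).Adj (.inr i) (.inr (i - k)) := by
    intro i
    have := (gp_adj_inner n k hk1 hk2 (i - k)).symm
    rwa [sub_add_cancel] at this
  induction m with
  | zero =>
    have : gpA n d (0 + 1) = {.inl (d : ZMod n)} := by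
      ext v
      rcases v with i | i
      · rw [gpA_inl]
        simp only [Set.mem_singleton_iff, Sum.inl.injEq]
        constructor
        · intro h
          exact gp_eq_cast n d i (by omega)
        · rintro rfl
          rw [gp_val_cast n d (by omega)]; omega
      · rw [gpA_inr]
        simp only [Set.mem_singleton_iff, reduceCtorEq, iff_false]
        omega
    rw [this]
    refine cross_singleton _ _ _ _ _ (hout _) (gp_adj_outer n k hn _) (gp_adj_spoke n k _)
      ?_ (by simp) (by simp) (gp_nbr_inl n k _)
    intro h
    simp only [Sum.inl.injEq] at h
    apply h20
    linear_combination -h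
  | succ m ih =>
    have ih := ih (by omega)
    rw [show m + 1 + 3 = (m + 3) + 1 by ring, ← ih]
    by_cases hj : d + (m + 1) < n
    · have hins : gpA n d (m + 1 + 1) = insert (.inl ((d + (m + 1) : ℕ) : ZMod n)) (gpA n d (m + 1)) := by
        ext v
        rcases v with i | i
        · rw [Set.mem_insert_iff, gpA_inl, gpA_inl]
          simp only [Sum.inl.injEq]
          constructor
          · intro h
            by_cases hi : i.val < d + (m + 1)
            · right; omega
            · left; exact gp_eq_cast n _ i (by omega)
          · rintro (rfl | h)
            · rw [gp_val_cast n _ hj]; omega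
            · omega
        · rw [Set.mem_insert_iff, gpA_inr, gpA_inr]
          simp only [reduceCtorEq, false_or]
          omega
      rw [hins]
      refine cross_insert _ _ _ (.inl (((d + (m + 1) : ℕ) : ZMod n) - 1)) (.inl (((d + (m + 1) : ℕ) : ZMod n) + 1))
        (.inr ((d + (m + 1) : ℕ) : ZMod n)) ?_ ?_ ?_ ?_ (hout _) (gp_adj_outer n k hn _) (gp_adj_spoke n k _)
        (by simp) (gp_nbr_inl n k _)
      · rw [gpA_inl, gp_val_cast n _ hj]; omega
      · rw [show (((d + (m + 1) : ℕ) : ZMod n) - 1) = ((d + m : ℕ) : ZMod n) by push_cast; ring,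
          gpA_inl, gp_val_cast n _ (by omega)]; omega
      · rw [show (((d + (m + 1) : ℕ) : ZMod n) + 1) = ((d + (m + 2) : ℕ) : ZMod n) by push_cast; ring]
        rcases Nat.lt_or_ge (d + (m + 2)) n with h | h
        · rw [gpA_inl, gp_val_cast n _ (by omega)]; omega
        · rw [show d + (m + 2) = n by omega, gpA_inl]; simp; omega
      · rw [gpA_inr, gp_val_cast n _ hj]; omega
    · obtain ⟨j, hj'⟩ : ∃ j, j + n = 2 * d + (m + 1) := ⟨2 * d + (m + 1) - n, by omega⟩
      have hins : gpA n d (m + 1 + 1) = insert (.inr ((j : ℕ) : ZMod n)) (gpA n d (m + 1)) := by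
        ext v
        rcases v with i | i
        · rw [Set.mem_insert_iff, gpA_inl, gpA_inl]
          simp only [reduceCtorEq, false_or]
          have := ZMod.val_lt i
          omega
        · rw [Set.mem_insert_iff, gpA_inr, gpA_inr]
          simp only [Sum.inr.injEq]
          constructor
          · intro h
            by_cases hi : i.val + n < 2 * d + (m + 1)
            · right; omega
            · left; exact gp_eq_cast n _ i (by omega)
          · rintro (rfl | h)
            · rw [gp_val_cast n _ (by omega)]; omega
            · omega
      have hjd : d ≤ j ∧ j < 2 * d := by omega
      have hkd : ∃ t : ℕ, k = t * d := by obtain ⟨t, ht⟩ := hdk; exact ⟨t, by rw [ht, mul_comm]⟩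
      obtain ⟨t, ht⟩ := hkd
      have hkz : (k : ZMod n) = (t : ZMod n) * d := by rw [ht]; push_cast; ring
      have hjz : ((j : ℕ) : ZMod n) = ((j - d : ℕ) : ZMod n) + d := by
        rw [← Nat.cast_add]; congr 1; omega
      have notin : ∀ z w : ZMod n, w ≠ 0 → (∃ s : ZMod n, w = s * d) → z = (j : ℕ) + w →
          (.inr z : ZMod n ⊕ ZMod n) ∉ gpA n d (m + 1) := by
        rintro z w hw ⟨s, hs⟩ hz hmem
        rw [gpA_inr] at hmem
        have h1 := gp_val_mod n d (j - d) hdn z ((1 + s) * d) ⟨1 + s, rfl⟩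
          (by rw [hz, hs, hjz]; ring) (by omega) hmem.1 (by omega)
        have h2 := gp_eq_cast n j z (by omega)
        apply hw
        rw [h2] at hz
        linear_combination -hz
      rw [hins]
      refine cross_insert _ _ _ (.inl ((j : ℕ) : ZMod n)) (.inr (((j : ℕ) : ZMod n) + k))
        (.inr (((j : ℕ) : ZMod n) - k)) ?_ ?_ ?_ ?_ (gp_adj_spoke n k _).symm
        (gp_adj_inner n k hk1 hk2 _) (hinn _) ?_ (gp_nbr_inr n k _)
      · rw [gpA_inr, gp_val_cast n _ (by omega)]; omega
      · rw [gpA_inl, gp_val_cast n _ (by omega)]; omega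
      · exact notin _ k hk0 ⟨_, hkz⟩ rfl
      · exact notin _ (-k) (by simpa using hk0) ⟨-t, by rw [hkz]; ring⟩ (by ring)
      · intro h
        simp only [Sum.inr.injEq] at h
        apply h2k
        linear_combination h

lemma gp_isBond (n k : ℕ) (hn : 3 ≤ n) (hk1 : 1 ≤ k) (hk2 : 2 * k < n) (m : ℕ) (hm0 : 0 < m)
    (hm : m ≤ n) :
    IsBond (GPetersen n k) (crossEdges (GPetersen n k) (gpA n (Nat.gcd n k) m)) := by
  have : NeZero n := ⟨by omega⟩
  have hdn : Nat.gcd n k ∣ n := Nat.gcd_dvd_left _ _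
  have hdk : Nat.gcd n k ∣ k := Nat.gcd_dvd_right _ _
  have hd0 : 0 < Nat.gcd n k := Nat.gcd_pos_of_pos_left _ (by omega)
  have hdk' : Nat.gcd n k ≤ k := Nat.le_of_dvd (by omega) hdk
  obtain ⟨L, j0, hj0, hL, hinj, hsurj⟩ := gp_orbit n k hn
  have hne : (crossEdges (GPetersen n k) (gpA n (Nat.gcd n k) m)).Nonempty := by
    have h := gp_card n k hn hk1 hk2 (m - 1) (by omega)
    rw [show m - 1 + 1 = m by omega] at h
    rw [← Set.ncard_pos (Set.toFinite _)]
    omega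
  generalize Nat.gcd n k = d at *
  obtain ⟨t, ht⟩ := hdk
  have hkz : (k : ZMod n) = (t : ZMod n) * d := by rw [ht]; push_cast; ring
  set A := gpA n d m with hA
  set H := (GPetersen n k).deleteEdges (crossEdges (GPetersen n k) A) with hH
  have hadj : ∀ a b, (GPetersen n k).Adj a b → (a ∈ A ↔ b ∈ A) → H.Reachable a b := by
    intro a b h h'
    apply Adj.reachable
    rw [hH, deleteEdges_adj, mem_cross]
    tauto
  have hinl : ∀ j : ℕ, j < n → ((.inl (j : ZMod n) : ZMod n ⊕ ZMod n) ∈ A ↔ d ≤ j ∧ j < d + m) := by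
    intro j hj
    rw [hA, gpA_inl, gp_val_cast n j hj]
  have hinr : ∀ j : ℕ, j < n → ((.inr (j : ZMod n) : ZMod n ⊕ ZMod n) ∈ A ↔ d ≤ j ∧ j + n < 2 * d + m) := by
    intro j hj
    rw [hA, gpA_inr, gp_val_cast n j hj]
  have hstep : ∀ j : ℕ, j + 1 < n → (d ≤ j ∧ j < d + m ↔ d ≤ j + 1 ∧ j + 1 < d + m) →
      H.Reachable (.inl ((j + 1 : ℕ) : ZMod n)) (.inl (j : ZMod n)) := by
    intro j hj h
    have h1 := gp_adj_outer n k hn (j : ZMod n)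
    rw [← Nat.cast_succ] at h1
    apply (hadj _ _ h1 _).symm
    rw [hinl j (by omega), hinl _ hj]
    exact h
  refine bond_of_cross _ A (.inl (d : ZMod n)) (.inl ((0 : ℕ) : ZMod n)) ?_ ?_ ?_ ?_ hne
  · rw [hinl d (by omega)]; omega
  · rw [hinl 0 (by omega)]; omega
  · skip
    have hx : ∀ p, d + p < n → p < m → H.Reachable (.inl ((d + p : ℕ) : ZMod n)) (.inl (d : ZMod n)) := by
      intro p
      induction p with
      | zero => intro _ _; exact Reachable.refl _
      | succ p ih =>
        intro h1 h2
        exact (hstep (d + p) h1 (by omega)).trans (ih (by omega) (by omega))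
    rintro (i | i) hi
    · obtain ⟨j, hj, rfl⟩ : ∃ j : ℕ, j < n ∧ i = (j : ZMod n) := ⟨i.val, ZMod.val_lt i, by simp⟩
      rw [hinl j hj] at hi
      have := hx (j - d) (by omega) (by omega)
      rwa [show d + (j - d) = j by omega] at this
    · obtain ⟨j, hj, rfl⟩ : ∃ j : ℕ, j < n ∧ i = (j : ZMod n) := ⟨i.val, ZMod.val_lt i, by simp⟩
      have hi2 := hi
      rw [hinr j hj] at hi
      have := hx (j - d) (by omega) (by omega)
      rw [show d + (j - d) = j by omega] at this
      refine (hadj _ _ (gp_adj_spoke n k (j : ZMod n)) ?_).symm.trans this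
      rw [hinl j hj, hinr j hj]
      omega
  · skip
    have hx1 : ∀ p, p < d → H.Reachable (.inl (p : ZMod n)) (.inl ((0 : ℕ) : ZMod n)) := by
      intro p
      induction p with
      | zero => intro _; exact Reachable.refl _
      | succ p ih =>
        intro h1
        exact (hstep p (by omega) (by omega)).trans (ih (by omega))
    have hx2 : ∀ p, d + m + p < n →
        H.Reachable (.inl ((n - 1 - p : ℕ) : ZMod n)) (.inl ((0 : ℕ) : ZMod n)) := by
      intro p
      induction p with
      | zero =>
        intro h
        have h1 := gp_adj_outer n k hn ((n - 1 : ℕ) : ZMod n)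
        rw [← Nat.cast_succ, show (n - 1).succ = n by omega, 
          show ((n : ℕ) : ZMod n) = ((0 : ℕ) : ZMod n) by simp] at h1
        apply hadj _ _ h1
        rw [hinl _ (by omega), hinl _ (by omega)]
        omega
      | succ p ih =>
        intro h
        have h1 := hstep (n - 1 - (p + 1)) (by omega) (by omega)
        rw [show n - 1 - (p + 1) + 1 = n - 1 - p by omega] at h1
        exact h1.symm.trans (ih (by omega))
    have hwalk : ∀ p : ℕ, ∀ i : ZMod n, (∀ q : ℕ, q ≤ p → (.inr (i + q * k) : ZMod n ⊕ ZMod n) ∉ A) →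
        H.Reachable (.inr i) (.inr (i + p * k)) := by
      intro p i
      induction p with
      | zero => intro _; simp
      | succ p ih =>
        intro h
        refine (ih fun q hq => h q (by omega)).trans ?_
        have h1 := gp_adj_inner n k hk1 hk2 (i + p * k)
        rw [show i + p * k + k = i + ((p + 1 : ℕ) : ZMod n) * k by push_cast; ring] at h1
        apply hadj _ _ h1
        have h2 := h p (by omega)
        have h3 := h (p + 1) le_rfl
        tauto
    rintro (i | i) hi
    · obtain ⟨j, hj, rfl⟩ : ∃ j : ℕ, j < n ∧ i = (j : ZMod n) := ⟨i.val, ZMod.val_lt i, by simp⟩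
      rw [hinl j hj] at hi
      by_cases hjd : j < d
      · exact hx1 j hjd
      · have := hx2 (n - 1 - j) (by omega)
        rwa [show n - 1 - (n - 1 - j) = j by omega] at this
    · obtain ⟨c, hc, j, hj, rfl⟩ : ∃ c : ℕ, c < d ∧ ∃ j : ℕ, j < L ∧ i = c + j * k := by
        obtain ⟨j, hj, h⟩ := hsurj (i.val / d)
        refine ⟨i.val % d, Nat.mod_lt _ hd0, j, hj, ?_⟩
        rw [h, ← Nat.cast_mul, ← Nat.cast_add, mul_comm, Nat.mod_add_div]
        simp
      have hin : ∀ j < L, (.inr (c + j * k) : ZMod n ⊕ ZMod n) ∈ A → j = j0 := by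
        intro j hj hmem
        rw [hA, gpA_inr] at hmem
        have h1 := gp_val_mod n d c hdn (c + j * k) (j * k) ⟨j * t, by rw [hkz]; ring⟩ rfl hc
          hmem.1 (by omega)
        have h2 := gp_eq_cast n _ _ h1
        apply hinj j hj
        push_cast at h2
        linear_combination h2
      have hcA : (.inr (c : ZMod n) : ZMod n ⊕ ZMod n) ∉ A := by
        rw [hinr c (by omega)]; omega
      have hc0 : H.Reachable (.inr (c : ZMod n)) (.inl ((0 : ℕ) : ZMod n)) := by
        refine (hadj _ _ (gp_adj_spoke n k (c : ZMod n)) ?_).symm.trans (hx1 c hc)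
        rw [hinl c (by omega), hinr c (by omega)]; omega
      refine Reachable.trans ?_ hc0
      rcases Nat.lt_or_ge j0 j with h | h
      · have h1 := hwalk (L - j) (c + j * k) (by
          intro q hq hmem
          rw [show (c : ZMod n) + j * k + q * k = c + ((j + q : ℕ) : ZMod n) * k by push_cast; ring] at hmem
          rcases Nat.lt_or_ge (j + q) L with h' | h'
          · have := hin _ h' hmem
            omega
          · rw [show j + q = L by omega, hL, add_zero] at hmem
            exact hcA hmem)
        rw [Nat.cast_sub hj.le, show (c : ZMod n) + j * k + (L - j) * k = c + L * k by ring, hL, add_zero] at h1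
        exact h1
      · refine (hwalk j c ?_).symm
        intro q hq hmem
        have := hin q (by omega) hmem
        have : q = j := by omega
        subst this
        exact hi hmem

/-- every bond of `P(n,k)` has size at most `n + 2`, and the set of bond
sizes is exactly `{3, 4, …, n + 2}`. -/
theorem gPetersen_cospectrum_eq (n k : ℕ) (hn : 3 ≤ n) (hk1 : 1 ≤ k) (hk2 : 2 * k < n) :
    (∀ B : Set (Sym2 (ZMod n ⊕ ZMod n)), IsBond (GPetersen n k) B → B.ncard ≤ n + 2) ∧
    {s : ℕ | ∃ B : Set (Sym2 (ZMod n ⊕ ZMod n)), IsBond (GPetersen n k) B ∧ B.ncard = s}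
      = {s : ℕ | 3 ≤ s ∧ s ≤ n + 2} := by
  refine ⟨gp_upper n k hn hk1 hk2, ?_⟩
  apply Set.Subset.antisymm
  · rintro s ⟨B, hB, rfl⟩
    exact ⟨gp_lower n k hn hk1 hk2 B hB.2.1, gp_upper n k hn hk1 hk2 B hB⟩
  · rintro s ⟨h3, hs⟩
    refine ⟨_, gp_isBond n k hn hk1 hk2 (s - 3 + 1) (by omega) (by omega), ?_⟩
    rw [gp_card n k hn hk1 hk2 (s - 3) (by omega)]
    omega
end

section
/- The generalized Petersen graph P(n, k), for n ≥ 3 and 1 ≤ k < n/2, is dual Hamiltonian: its vertex set can be partitioned into sets A and B such that both induced subgraphs are trees, equivalently it has a bond of size n + 2 = |E| - |V| + 2. -/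
open SimpleGraph

theorem isTree_induce_of_parent {V : Type*} [Finite V] (G : SimpleGraph V) (S : Set V) (r : V)
    (hr : r ∈ S) (p : V → V) (rank : V → ℕ)
    (h1 : ∀ v ∈ S, v ≠ r → p v ∈ S ∧ G.Adj v (p v) ∧ rank (p v) < rank v)
    (h2 : ∀ u ∈ S, ∀ v ∈ S, G.Adj u v → (u ≠ r ∧ p u = v) ∨ (v ≠ r ∧ p v = u)) :
    (G.induce S).IsTree := by
  classical
  have hreach : ∀ m : ℕ, ∀ v : S, rank v = m → (G.induce S).Reachable v ⟨r, hr⟩ := by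
    intro m
    induction m using Nat.strong_induction_on with
    | _ m ih =>
      rintro ⟨v, hv⟩ hm
      by_cases hvr : v = r
      · subst hvr; exact Reachable.refl _
      · obtain ⟨a, b, c⟩ := h1 v hv hvr
        have hadj : (G.induce S).Adj ⟨v, hv⟩ ⟨p v, a⟩ := b
        exact hadj.reachable.trans (ih _ (by simpa [← hm] using c) ⟨p v, a⟩ rfl)
  have hconn : (G.induce S).Connected := by
    have : Nonempty S := ⟨⟨r, hr⟩⟩
    exact ⟨fun u v => (hreach _ u rfl).trans (hreach _ v rfl).symm⟩
  rw [isTree_iff_connected_and_card]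
  refine ⟨hconn, ?_⟩
  refine le_antisymm ?_ hconn.card_vert_le_card_edgeSet_add_one
  let q : S → S := fun v => if h : p v ∈ S then ⟨p v, h⟩ else v
  have hsub : (G.induce S).edgeSet ⊆ (fun v : S => s(v, q v)) '' {v : S | v ≠ ⟨r, hr⟩} := by
    intro e
    induction e with
    | _ u v =>
      intro he
      obtain ⟨u, hu⟩ := u
      obtain ⟨v, hv⟩ := v
      have he' : G.Adj u v := he
      rcases h2 u hu v hv he' with ⟨h, h'⟩ | ⟨h, h'⟩
      · refine ⟨⟨u, hu⟩, by simpa using h, ?_⟩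
        simp [q, h', hv]
      · refine ⟨⟨v, hv⟩, by simpa using h, ?_⟩
        simp [q, h', hu, Sym2.eq_swap]
  have h3 := Set.ncard_le_ncard hsub (Set.toFinite _)
  have h4 := Set.ncard_image_le (f := fun v : S => s(v, q v)) (Set.toFinite {v : S | v ≠ ⟨r, hr⟩})
  have h5 : ({v : S | v ≠ ⟨r, hr⟩}).ncard + 1 = Nat.card S := by
    have : {v : S | v ≠ ⟨r, hr⟩} = ({⟨r, hr⟩} : Set S)ᶜ := rfl
    rw [this]
    have := Set.ncard_add_ncard_compl ({⟨r, hr⟩} : Set S)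
    rw [Set.ncard_singleton] at this
    omega
  rw [Nat.card_coe_set_eq]
  omega

theorem ncard_inside {V : Type*} [Finite V] (G : SimpleGraph V) (S : Set V)
    (h : (G.induce S).IsTree) :
    ({e ∈ G.edgeSet | ∀ v ∈ e, v ∈ S}).ncard + 1 = S.ncard := by
  have h1 := (isTree_iff_connected_and_card.1 h).2
  have h2 : {e ∈ G.edgeSet | ∀ v ∈ e, v ∈ S} =
      Sym2.map (Subtype.val : S → V) '' (G.induce S).edgeSet := by
    ext e
    constructor
    · induction e with
      | _ u v =>
        rintro ⟨he, hS⟩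
        exact ⟨s(⟨u, hS u (by simp)⟩, ⟨v, hS v (by simp)⟩), he, by simp⟩
    · rintro ⟨e, he, rfl⟩
      induction e with
      | _ u v =>
        refine ⟨he, ?_⟩
        intro w hw
        simp at hw
        rcases hw with rfl | rfl
        exacts [u.2, v.2]
  rw [h2, Set.ncard_image_of_injective _ (Sym2.map.injective Subtype.val_injective),
    ← Nat.card_coe_set_eq, h1, Nat.card_coe_set_eq]

theorem ncard_cross {V : Type*} [Finite V] (G : SimpleGraph V) (A : Set V)
    (hA : (G.induce A).IsTree) (hB : (G.induce Aᶜ).IsTree) :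
    (crossEdges G A).ncard + Nat.card V = G.edgeSet.ncard + 2 := by
  have a := ncard_inside G A hA
  have b := ncard_inside G Aᶜ hB
  have c := Set.ncard_add_ncard_compl A
  have hU : G.edgeSet = crossEdges G A ∪
      ({e ∈ G.edgeSet | ∀ v ∈ e, v ∈ A} ∪ {e ∈ G.edgeSet | ∀ v ∈ e, v ∈ Aᶜ}) := by
    ext e
    induction e with
    | _ u v =>
      constructor
      · intro he
        by_cases hu : u ∈ A <;> by_cases hv : v ∈ A
        · right; left; exact ⟨he, by simp [hu, hv]⟩
        · left; exact ⟨he, u, hu, v, hv, rfl⟩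
        · left; exact ⟨he, v, hv, u, hu, Sym2.eq_swap⟩
        · right; right; exact ⟨he, by simp [hu, hv]⟩
      · rintro (h | h | h) <;> exact h.1
  have d1 : Disjoint {e ∈ G.edgeSet | ∀ v ∈ e, v ∈ A} {e ∈ G.edgeSet | ∀ v ∈ e, v ∈ Aᶜ} := by
    rw [Set.disjoint_left]
    intro e
    induction e with
    | _ u v =>
      intro h h'
      exact h'.2 u (by simp) (h.2 u (by simp))
  have d2 : Disjoint (crossEdges G A)
      ({e ∈ G.edgeSet | ∀ v ∈ e, v ∈ A} ∪ {e ∈ G.edgeSet | ∀ v ∈ e, v ∈ Aᶜ}) := by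
    rw [Set.disjoint_left]
    rintro e ⟨_, x, hx, y, hy, rfl⟩ (h | h)
    · exact hy (h.2 y (by simp))
    · exact h.2 x (by simp) hx
  have e1 := Set.ncard_union_eq d1 (Set.toFinite _) (Set.toFinite _)
  have e2 := Set.ncard_union_eq d2 (Set.toFinite _) (Set.toFinite _)
  rw [← hU] at e2
  omega

theorem isBond_cross {V : Type*} (G : SimpleGraph V) (A : Set V)
    (hA : (G.induce A).Connected) (hB : (G.induce Aᶜ).Connected)
    (hne : (crossEdges G A).Nonempty) : IsBond G (crossEdges G A) := by
  refine ⟨hne, ⟨fun e he => he.1, ?_⟩, ?_⟩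
  · intro hc
    obtain ⟨⟨a, ha⟩⟩ := hA.nonempty
    obtain ⟨⟨b, hb⟩⟩ := hB.nonempty
    obtain ⟨w⟩ := hc.preconnected a b
    have key : ∀ {u v : V}, (G.deleteEdges (crossEdges G A)).Walk u v → u ∈ A → v ∈ A := by
      intro u v w
      induction w with
      | nil => exact id
      | @cons u v w h _ ih =>
        intro hu
        apply ih
        by_contra hv
        rw [deleteEdges_adj] at h
        exact h.2 ⟨h.1, u, hu, v, hv, rfl⟩
    exact hb (key w ha)
  · rintro T hT _ ⟨_, hnc⟩
    apply hnc
    obtain ⟨hTS, hTn⟩ := Set.ssubset_iff_exists.1 hT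
    obtain ⟨e, ⟨heG, x, hx, y, hy, rfl⟩, heT⟩ := hTn
    have hxy : (G.deleteEdges T).Adj x y := by
      rw [deleteEdges_adj]; exact ⟨heG, heT⟩
    have fA : ∀ u (hu : u ∈ A) v (hv : v ∈ A), (G.deleteEdges T).Reachable u v := by
      intro u hu v hv
      let f : G.induce A →g G.deleteEdges T := ⟨Subtype.val, by
        rintro ⟨a, ha⟩ ⟨b, hb⟩ hab
        rw [deleteEdges_adj]
        refine ⟨hab, fun h => ?_⟩
        obtain ⟨_, c, hc, d, hd, hcd⟩ := hTS h
        rw [Sym2.eq_iff] at hcd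
        rcases hcd with ⟨rfl, rfl⟩ | ⟨rfl, rfl⟩
        · exact hd hb
        · exact hd ha⟩
      exact (hA.preconnected ⟨u, hu⟩ ⟨v, hv⟩).map f
    have fB : ∀ u (hu : u ∈ Aᶜ) v (hv : v ∈ Aᶜ), (G.deleteEdges T).Reachable u v := by
      intro u hu v hv
      let f : G.induce Aᶜ →g G.deleteEdges T := ⟨Subtype.val, by
        rintro ⟨a, ha⟩ ⟨b, hb⟩ hab
        rw [deleteEdges_adj]
        refine ⟨hab, fun h => ?_⟩
        obtain ⟨_, c, hc, d, hd, hcd⟩ := hTS h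
        rw [Sym2.eq_iff] at hcd
        rcases hcd with ⟨rfl, rfl⟩ | ⟨rfl, rfl⟩
        · exact ha hc
        · exact hb hc⟩
      exact (hB.preconnected ⟨u, hu⟩ ⟨v, hv⟩).map f
    have fx : ∀ u, (G.deleteEdges T).Reachable u x := by
      intro u
      by_cases hu : u ∈ A
      · exact fA u hu x hx
      · exact (fB u hu y hy).trans hxy.symm.reachable
    have : Nonempty V := ⟨x⟩
    exact ⟨fun u v => (fx u).trans (fx v).symm⟩

theorem nat_ne_zero_zmod {n m : ℕ} (h0 : 0 < m) (h1 : m < n) : (m : ZMod n) ≠ 0 := by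
  intro h
  rw [ZMod.natCast_eq_zero_iff] at h
  exact absurd (Nat.le_of_dvd h0 h) (by omega)

theorem gP_adj {n k : ℕ} (hn : 3 ≤ n) (hk1 : 1 ≤ k) (hk2 : 2 * k < n) (a b : ZMod n ⊕ ZMod n) :
    (GPetersen n k).Adj a b ↔
    ((∃ i : ZMod n, a = Sum.inl i ∧ b = Sum.inl (i + 1)) ∨
    (∃ i : ZMod n, a = Sum.inl i ∧ b = Sum.inr i) ∨
    (∃ i : ZMod n, a = Sum.inr i ∧ b = Sum.inr (i + (k : ZMod n)))) ∨
    ((∃ i : ZMod n, b = Sum.inl i ∧ a = Sum.inl (i + 1)) ∨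
    (∃ i : ZMod n, b = Sum.inl i ∧ a = Sum.inr i) ∨
    (∃ i : ZMod n, b = Sum.inr i ∧ a = Sum.inr (i + (k : ZMod n)))) := by
  have h1 : (1 : ZMod n) ≠ 0 := by
    simpa using nat_ne_zero_zmod (n := n) (m := 1) (by omega) (by omega)
  have h2 : (k : ZMod n) ≠ 0 := nat_ne_zero_zmod (by omega) (by omega)
  unfold GPetersen
  rw [fromRel_adj]
  refine and_iff_right_of_imp ?_
  rintro ((⟨i, rfl, rfl⟩ | ⟨i, rfl, rfl⟩ | ⟨i, rfl, rfl⟩) |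
    (⟨i, rfl, rfl⟩ | ⟨i, rfl, rfl⟩ | ⟨i, rfl, rfl⟩)) <;> simp [h1, h2]

theorem gP_card {n k : ℕ} (hn : 3 ≤ n) (hk1 : 1 ≤ k) (hk2 : 2 * k < n) :
    (GPetersen n k).edgeSet.ncard = 3 * n := by
  have : NeZero n := ⟨by omega⟩
  have h1 : (2 : ZMod n) ≠ 0 := by
    simpa using nat_ne_zero_zmod (n := n) (m := 2) (by omega) (by omega)
  have h2 : 2 * (k : ZMod n) ≠ 0 := by
    simpa using nat_ne_zero_zmod (n := n) (m := 2 * k) (by omega) (by omega)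
  let f : ZMod n ⊕ ZMod n ⊕ ZMod n → Sym2 (ZMod n ⊕ ZMod n) := fun t => match t with
    | Sum.inl i => s(Sum.inl i, Sum.inl (i + 1))
    | Sum.inr (Sum.inl i) => s(Sum.inl i, Sum.inr i)
    | Sum.inr (Sum.inr i) => s(Sum.inr i, Sum.inr (i + k))
  have hf : Function.Injective f := by
    rintro (i | i | i) (j | j | j) h <;> simp [f] at h ⊢
    · rcases h with h | ⟨h, h'⟩
      · exact h
      · exact absurd (by linear_combination h' - h) h1
    · exact h
    · rcases h with h | ⟨h, h'⟩
      · exact h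
      · exact absurd (by linear_combination h' - h) h2
  have hr : (GPetersen n k).edgeSet = Set.range f := by
    ext e
    induction e with
    | _ a b =>
      rw [mem_edgeSet, gP_adj hn hk1 hk2]
      constructor
      · rintro ((⟨i, rfl, rfl⟩ | ⟨i, rfl, rfl⟩ | ⟨i, rfl, rfl⟩) |
          (⟨i, rfl, rfl⟩ | ⟨i, rfl, rfl⟩ | ⟨i, rfl, rfl⟩))
        · exact ⟨Sum.inl i, rfl⟩
        · exact ⟨Sum.inr (Sum.inl i), rfl⟩
        · exact ⟨Sum.inr (Sum.inr i), rfl⟩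
        · exact ⟨Sum.inl i, Sym2.eq_swap⟩
        · exact ⟨Sum.inr (Sum.inl i), Sym2.eq_swap⟩
        · exact ⟨Sum.inr (Sum.inr i), Sym2.eq_swap⟩
      · rintro ⟨(i | i | i), h⟩ <;> simp only [f] at h <;> rw [Sym2.eq_iff] at h <;>
          rcases h with ⟨rfl, rfl⟩ | ⟨rfl, rfl⟩ <;> simp
  rw [hr, ← Set.image_univ, Set.ncard_image_of_injective _ hf, Set.ncard_univ]
  simp [Nat.card_sum]
  omega

/-- The values of `v - m` in `ZMod n`. -/
theorem val_sub_nat {n : ℕ} [NeZero n] (v : ZMod n) (m : ℕ) (hm : m < n) :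
    (v - m).val = if m ≤ v.val then v.val - m else v.val + n - m := by
  have hm' : (m : ZMod n).val = m := ZMod.val_natCast_of_lt hm
  have hv := ZMod.val_lt v
  split_ifs with h
  · rw [ZMod.val_sub (by rwa [hm']), hm']
  · have : v - m = ((v.val + n - m : ℕ) : ZMod n) := by
      rw [Nat.cast_sub (by omega)]; simp
    rw [this, ZMod.val_natCast_of_lt (by omega)]

theorem val_add_nat {n : ℕ} [NeZero n] (v : ZMod n) (m : ℕ) (hm : m < n) :
    (v + m).val = if v.val + m < n then v.val + m else v.val + m - n := by
  have hm' : (m : ZMod n).val = m := ZMod.val_natCast_of_lt hm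
  have hv := ZMod.val_lt v
  split_ifs with h
  · rw [ZMod.val_add_of_lt (by rwa [hm']), hm']
  · have : v + m = ((v.val + m - n : ℕ) : ZMod n) := by
      rw [Nat.cast_sub (by omega)]; simp
    rw [this, ZMod.val_natCast_of_lt (by omega)]

theorem exists_steps {n k : ℕ} [NeZero n] (hk1 : 1 ≤ k) (v : ZMod n) :
    ∃ j : ℕ, (v - (j : ZMod n) * k).val < Nat.gcd n k := by
  set d := Nat.gcd n k with hd
  have hdpos : 0 < d := Nat.gcd_pos_of_pos_right _ (by omega)
  have hdn : d ≤ n := Nat.gcd_le_left _ (NeZero.pos n)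
  have hb : (d : ZMod n) = (k : ZMod n) * ((Nat.gcdB n k : ℤ) : ZMod n) := by
    have h := Nat.gcd_eq_gcd_ab n k
    have h' := congrArg (fun z : ℤ => (z : ZMod n)) h
    simpa [← hd] using h'
  refine ⟨(((Nat.gcdB n k : ℤ) : ZMod n) * ((v.val / d : ℕ) : ZMod n)).val, ?_⟩
  have hv : v = ((d * (v.val / d) + v.val % d : ℕ) : ZMod n) := by
    rw [Nat.div_add_mod]; simp
  have hmod : v.val % d < d := Nat.mod_lt _ hdpos
  have : v - ((((((Nat.gcdB n k : ℤ) : ZMod n) * ((v.val / d : ℕ) : ZMod n)).val : ℕ)) : ZMod n) * k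
      = ((v.val % d : ℕ) : ZMod n) := by
    rw [ZMod.natCast_zmod_val]
    have e := Nat.cast_add (R := ZMod n) (d * (v.val / d)) (v.val % d)
    rw [Nat.cast_mul, hb] at e
    linear_combination hv.trans e
  rw [this, ZMod.val_natCast_of_lt (by omega)]
  exact hmod

/-- One side of the partition. -/
def sideA (n k : ℕ) : Set (ZMod n ⊕ ZMod n) := fun t => match t with
  | Sum.inl i => Nat.gcd n k ≤ (i - (k : ZMod n)).val
  | Sum.inr i => i.val < Nat.gcd n k

theorem inl_mem_sideA {n k : ℕ} (i : ZMod n) :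
    (Sum.inl i ∈ sideA n k) ↔ Nat.gcd n k ≤ (i - (k : ZMod n)).val := Iff.rfl

theorem inr_mem_sideA {n k : ℕ} (i : ZMod n) :
    (Sum.inr i ∈ sideA n k) ↔ i.val < Nat.gcd n k := Iff.rfl

theorem sideA_tree {n k : ℕ} (hn : 3 ≤ n) (hk1 : 1 ≤ k) (hk2 : 2 * k < n) :
    ((GPetersen n k).induce (sideA n k)).IsTree := by
  have : NeZero n := ⟨by omega⟩
  have hdpos : 0 < Nat.gcd n k := Nat.gcd_pos_of_pos_right _ (by omega)
  have hdk : Nat.gcd n k ≤ k := Nat.gcd_le_right _ (by omega)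
  have hpath : ∀ i : ZMod n, Sum.inl i ∈ sideA n k → i + 1 ≠ (k : ZMod n) + (Nat.gcd n k : ℕ) := by
    intro i hi h
    rw [inl_mem_sideA] at hi
    have e : i - (k : ZMod n) = ((Nat.gcd n k - 1 : ℕ) : ZMod n) := by
      rw [Nat.cast_sub hdpos]
      push_cast
      linear_combination h
    rw [e, ZMod.val_natCast_of_lt (by omega)] at hi
    omega
  have hinner : ∀ i : ZMod n, Sum.inr i ∈ sideA n k → Sum.inr (i + (k : ZMod n)) ∉ sideA n k := by
    intro i hi h
    rw [inr_mem_sideA] at hi h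
    rw [val_add_nat _ _ (by omega)] at h
    split_ifs at h <;> omega
  refine isTree_induce_of_parent (GPetersen n k) (sideA n k)
    (Sum.inl ((k : ZMod n) + (Nat.gcd n k : ℕ))) ?_
    (fun t => match t with
      | Sum.inl i => Sum.inl (i - 1)
      | Sum.inr i => Sum.inl i)
    (fun t => match t with
      | Sum.inl i => (i - (k : ZMod n)).val
      | Sum.inr _ => n) ?_ ?_
  · rw [inl_mem_sideA, add_sub_cancel_left, ZMod.val_natCast_of_lt (by omega)]
  · rintro (i | i) hi hne
    · rw [inl_mem_sideA] at hi
      have hne' : (i - (k : ZMod n)).val ≠ Nat.gcd n k := by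
        intro h
        apply hne
        rw [← h, ZMod.natCast_zmod_val]
        simp
      have hv : (i - 1 - (k : ZMod n)).val = (i - (k : ZMod n)).val - 1 := by
        have := val_sub_nat (i - (k : ZMod n)) 1 (by omega)
        rw [if_pos (by omega)] at this
        rw [← this]
        congr 1
        push_cast
        ring
      refine ⟨?_, ?_, ?_⟩
      · show Sum.inl (i - 1) ∈ sideA n k
        rw [inl_mem_sideA, hv]
        omega
      · rw [gP_adj hn hk1 hk2]
        right; left
        exact ⟨i - 1, rfl, by simp⟩
      · show (i - 1 - (k : ZMod n)).val < (i - (k : ZMod n)).val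
        omega
    · rw [inr_mem_sideA] at hi
      refine ⟨?_, ?_, ZMod.val_lt _⟩
      · show Sum.inl i ∈ sideA n k
        rw [inl_mem_sideA, val_sub_nat _ _ (by omega)]
        split_ifs <;> omega
      · rw [gP_adj hn hk1 hk2]
        right; right; left
        exact ⟨i, rfl, rfl⟩
  · intro u hu v hv h
    rw [gP_adj hn hk1 hk2] at h
    rcases h with (⟨i, rfl, rfl⟩ | ⟨i, rfl, rfl⟩ | ⟨i, rfl, rfl⟩) |
      (⟨i, rfl, rfl⟩ | ⟨i, rfl, rfl⟩ | ⟨i, rfl, rfl⟩)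
    · right; exact ⟨by simpa using hpath i hu, by simp⟩
    · right; exact ⟨by simp, rfl⟩
    · exact absurd hv (hinner i hu)
    · left; exact ⟨by simpa using hpath i hv, by simp⟩
    · left; exact ⟨by simp, rfl⟩
    · exact absurd hu (hinner i hv)

open Classical in
theorem sideB_tree {n k : ℕ} (hn : 3 ≤ n) (hk1 : 1 ≤ k) (hk2 : 2 * k < n) :
    ((GPetersen n k).induce (sideA n k)ᶜ).IsTree := by
  have : NeZero n := ⟨by omega⟩
  have hdpos : 0 < Nat.gcd n k := Nat.gcd_pos_of_pos_right _ (by omega)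
  have hdk : Nat.gcd n k ≤ k := Nat.gcd_le_right _ (by omega)
  have hl : ∀ i : ZMod n, Sum.inl i ∈ (sideA n k)ᶜ ↔ (i - (k : ZMod n)).val < Nat.gcd n k := by
    intro i
    rw [Set.mem_compl_iff, inl_mem_sideA, not_le]
  have hr : ∀ i : ZMod n, Sum.inr i ∈ (sideA n k)ᶜ ↔ Nat.gcd n k ≤ i.val := by
    intro i
    rw [Set.mem_compl_iff, inr_mem_sideA, not_lt]
  have hpath : ∀ i : ZMod n, Sum.inl i ∈ (sideA n k)ᶜ → i + 1 ≠ (k : ZMod n) := by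
    intro i hi h
    rw [hl] at hi
    have e : i - (k : ZMod n) = ((n - 1 : ℕ) : ZMod n) := by
      rw [Nat.cast_sub (by omega)]
      push_cast
      rw [ZMod.natCast_self]
      linear_combination h
    rw [e, ZMod.val_natCast_of_lt (by omega)] at hi
    omega
  let F : ZMod n → ℕ := fun v => Nat.find (exists_steps (k := k) hk1 v)
  have hF : ∀ v : ZMod n, Nat.gcd n k ≤ v.val → F (v - (k : ZMod n)) < F v := by
    intro v hv
    have h := Nat.find_spec (exists_steps (k := k) hk1 v)
    change (v - (F v : ZMod n) * k).val < _ at h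
    have hpos : F v ≠ 0 := by
      intro h0
      rw [h0] at h
      simp at h
      omega
    have : F (v - (k : ZMod n)) ≤ F v - 1 := by
      apply Nat.find_min'
      convert h using 2
      rw [Nat.cast_sub (by omega)]
      push_cast
      ring
    omega
  refine isTree_induce_of_parent (GPetersen n k) (sideA n k)ᶜ (Sum.inl (k : ZMod n)) ?_
    (fun t => match t with
      | Sum.inl i => Sum.inl (i - 1)
      | Sum.inr i => if (i - (k : ZMod n)).val < Nat.gcd n k then Sum.inl i
          else Sum.inr (i - (k : ZMod n)))
    (fun t => match t with
      | Sum.inl i => (i - (k : ZMod n)).val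
      | Sum.inr i => n + F i) ?_ ?_
  · rw [hl]; simpa using hdpos
  · rintro (i | i) hi hne
    · rw [hl] at hi
      have hne' : (i - (k : ZMod n)).val ≠ 0 := by
        intro h
        apply hne
        rw [ZMod.val_eq_zero, sub_eq_zero] at h
        rw [h]
      have hv : (i - 1 - (k : ZMod n)).val = (i - (k : ZMod n)).val - 1 := by
        have := val_sub_nat (i - (k : ZMod n)) 1 (by omega)
        rw [if_pos (by omega)] at this
        rw [← this]
        congr 1
        push_cast
        ring
      refine ⟨?_, ?_, ?_⟩
      · show Sum.inl (i - 1) ∈ (sideA n k)ᶜ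
        rw [hl, hv]
        omega
      · rw [gP_adj hn hk1 hk2]
        right; left
        exact ⟨i - 1, rfl, by simp⟩
      · show (i - 1 - (k : ZMod n)).val < (i - (k : ZMod n)).val
        omega
    · rw [hr] at hi
      by_cases hc : (i - (k : ZMod n)).val < Nat.gcd n k
      · simp only [hc, if_true]
        refine ⟨(hl i).2 hc, ?_, ?_⟩
        · rw [gP_adj hn hk1 hk2]
          right; right; left
          exact ⟨i, rfl, rfl⟩
        · have := ZMod.val_lt (i - (k : ZMod n))
          omega
      · simp only [hc, if_false]
        refine ⟨(hr _).2 (not_lt.1 hc), ?_, ?_⟩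
        · rw [gP_adj hn hk1 hk2]
          right; right; right
          exact ⟨i - k, rfl, by simp⟩
        · have := hF i hi
          omega
  · intro u hu v hv h
    rw [gP_adj hn hk1 hk2] at h
    rcases h with (⟨i, rfl, rfl⟩ | ⟨i, rfl, rfl⟩ | ⟨i, rfl, rfl⟩) |
      (⟨i, rfl, rfl⟩ | ⟨i, rfl, rfl⟩ | ⟨i, rfl, rfl⟩)
    · right; exact ⟨by simpa using hpath i hu, by simp⟩
    · right; exact ⟨by simp, if_pos ((hl i).1 hu)⟩
    · right
      have := (hr i).1 hu
      refine ⟨by simp, ?_⟩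
      simp [this]
    · left; exact ⟨by simpa using hpath i hv, by simp⟩
    · left; exact ⟨by simp, if_pos ((hl i).1 hv)⟩
    · left
      have := (hr i).1 hv
      refine ⟨by simp, ?_⟩
      simp [this]

/-- `P(n,k)` is dual Hamiltonian: its vertex set splits into two nonempty parts
both inducing trees, equivalently it has a bond of size `n + 2 = |E| - |V| + 2`. -/
theorem gPetersen_dual_hamiltonian (n k : ℕ) (hn : 3 ≤ n) (hk1 : 1 ≤ k) (hk2 : 2 * k < n) :
    (∃ A : Set (ZMod n ⊕ ZMod n), A.Nonempty ∧ Aᶜ.Nonempty ∧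
        ((GPetersen n k).induce A).IsTree ∧ ((GPetersen n k).induce Aᶜ).IsTree) ∧
    (∃ B : Set (Sym2 (ZMod n ⊕ ZMod n)), IsBond (GPetersen n k) B ∧ B.ncard = n + 2) := by

  have : NeZero n := ⟨by omega⟩
  have hA := sideA_tree hn hk1 hk2
  have hB := sideB_tree hn hk1 hk2
  have hcard : (crossEdges (GPetersen n k) (sideA n k)).ncard = n + 2 := by
    have h := ncard_cross (GPetersen n k) (sideA n k) hA hB
    rw [gP_card hn hk1 hk2, Nat.card_sum, Nat.card_zmod] at h
    omega
  refine ⟨⟨sideA n k, ?_, ?_, hA, hB⟩, ⟨crossEdges (GPetersen n k) (sideA n k), ?_, hcard⟩⟩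
  · exact Set.nonempty_coe_sort.1 hA.connected.nonempty
  · exact Set.nonempty_coe_sort.1 hB.connected.nonempty
  · refine isBond_cross _ _ hA.connected hB.connected ?_
    apply Set.nonempty_of_ncard_ne_zero
    omega
end
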